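/- arXiv:2202.10703 — 8 statements merged into one kernel-verified Lean document; each statement's English description precedes it below -/
import Mathlib

section
/- Let a, b, c > 0 and let f(Q) = C − (a/2)tr(Q²) − (b/3)tr(Q³) + (c/4)(tr(Q²))² on Sym₀, with C chosen so that min f = 0. Then f(Q) = 0 if and only if Q = s*(n⊗n − (1/3)I) for some unit vector n ∈ ℝ³, where s* = (b + √(b² + 24ac))/(4c). In particular the zero set f⁻¹(0) equals 𝒩. -/
/- STATEMENT 0: Let a, b, c > 0 and f(Q) = C − (a/2)tr(Q²) − (b/3)tr(Q³) + (c/4)(tr(Q²))²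
on Sym₀ (symmetric traceless 3×3 real matrices), with C chosen so that min f = 0.
Then f(Q) = 0 iff Q = s*(n⊗n − (1/3)I) for some unit n ∈ ℝ³, s* = (b + √(b²+24ac))/(4c);
in particular f⁻¹(0) = 𝒩. -/

noncomputable section

open Matrix

abbrev Mat3 : Type := Matrix (Fin 3) (Fin 3) ℝ

/-- Symmetric traceless 3×3 real matrices. -/
def Sym0 : Set Mat3 := {Q | Q.IsSymm ∧ Q.trace = 0}

def unitVec (n : Fin 3 → ℝ) : Prop := ∑ i, (n i) ^ 2 = 1

/-- `s (n⊗n − (1/3) Id)`. -/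
def uniax (s : ℝ) (n : Fin 3 → ℝ) : Mat3 :=
  s • (Matrix.vecMulVec n n - (1 / 3 : ℝ) • (1 : Mat3))

def sStar (a b c : ℝ) : ℝ := (b + Real.sqrt (b ^ 2 + 24 * a * c)) / (4 * c)

/-- The Landau-de Gennes bulk potential. -/
def fLdG (a b c C : ℝ) (Q : Mat3) : ℝ :=
  C - a / 2 * (Q * Q).trace - b / 3 * (Q * Q * Q).trace + c / 4 * ((Q * Q).trace) ^ 2

/-- The vacuum manifold 𝒩 = { s (n⊗n − Id/3) : |n| = 1 }. -/
def NsetM (s : ℝ) : Set Mat3 := {Q | ∃ n, unitVec n ∧ Q = uniax s n}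

theorem diagonalize_aux (Q : Mat3) (hQ : Q.IsSymm) :
    ∃ (U : Mat3) (d : Fin 3 → ℝ), U * Uᵀ = 1 ∧ Uᵀ * U = 1 ∧ Q = U * diagonal d * Uᵀ := by
  have hH : Q.IsHermitian := by
    rw [Matrix.IsHermitian, Matrix.conjTranspose_eq_transpose_of_trivial]; exact hQ
  refine ⟨(hH.eigenvectorUnitary : Mat3), hH.eigenvalues, ?_, ?_, ?_⟩
  · have := Unitary.coe_mul_star_self hH.eigenvectorUnitary
    rwa [Unitary.coe_star, Matrix.star_eq_conjTranspose, Matrix.conjTranspose_eq_transpose_of_trivial] at this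
  · have := Unitary.coe_star_mul_self hH.eigenvectorUnitary
    rwa [Matrix.star_eq_conjTranspose, Matrix.conjTranspose_eq_transpose_of_trivial] at this
  · have := hH.spectral_theorem
    rw [Unitary.conjStarAlgAut_apply, Matrix.star_eq_conjTranspose,
      Matrix.conjTranspose_eq_transpose_of_trivial] at this
    exact this

theorem traces_aux (U : Mat3) (d : Fin 3 → ℝ) (h : Uᵀ * U = 1) (Q : Mat3)
    (hQ : Q = U * diagonal d * Uᵀ) :
    Q.trace = d 0 + d 1 + d 2 ∧ (Q * Q).trace = d 0 ^ 2 + d 1 ^ 2 + d 2 ^ 2 ∧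
    (Q * Q * Q).trace = d 0 ^ 3 + d 1 ^ 3 + d 2 ^ 3 := by
  have h2 : Q * Q = U * (diagonal d * diagonal d) * Uᵀ := by
    calc Q * Q = U * diagonal d * (Uᵀ * U) * diagonal d * Uᵀ := by
          rw [hQ]; simp only [Matrix.mul_assoc]
      _ = _ := by rw [h]; simp only [Matrix.mul_assoc, Matrix.one_mul]
  have h3 : Q * Q * Q = U * (diagonal d * diagonal d * diagonal d) * Uᵀ := by
    calc Q * Q * Q = U * (diagonal d * diagonal d) * (Uᵀ * U) * diagonal d * Uᵀ := by
          rw [h2, hQ]; simp only [Matrix.mul_assoc]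
      _ = _ := by rw [h]; simp only [Matrix.mul_assoc, Matrix.one_mul]
  have key : ∀ D : Mat3, (U * D * Uᵀ).trace = D.trace := by
    intro D
    rw [Matrix.trace_mul_comm, ← Matrix.mul_assoc, h, Matrix.one_mul]
  refine ⟨?_, ?_, ?_⟩
  · rw [hQ, key]; simp [Matrix.trace_diagonal, Fin.sum_univ_three]
  · rw [h2, key]; simp [Matrix.trace_diagonal, Fin.sum_univ_three]; ring
  · rw [h3, key]; simp [Matrix.trace_diagonal, Fin.sum_univ_three]; ring

def hpot (a b c r : ℝ) : ℝ := c / 9 * r ^ 4 - 2 * b / 27 * r ^ 3 - a / 3 * r ^ 2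

theorem hpot_aux (a b c s r : ℝ) (hc : 0 < c) (hs : 0 < s) (hr : 0 ≤ r)
    (hq : 2 * c * s ^ 2 = b * s + 3 * a) (hp : b < 2 * c * s) :
    hpot a b c s ≤ hpot a b c r ∧ (hpot a b c r = hpot a b c s → r = s) := by
  have e : hpot a b c r - hpot a b c s = (r - s) ^ 2 *
      (c / 9 * r ^ 2 + (2 * s * c / 9 - 2 * b / 27) * r + (2 * s * c / 9 - 2 * b / 27) * s / 2) := by
    have : a = (2 * c * s ^ 2 - b * s) / 3 := by linarith
    unfold hpot
    rw [this]; ring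
  have hcs : 0 < c * s := mul_pos hc hs
  have p : 0 < 2 * s * c / 9 - 2 * b / 27 := by nlinarith
  have pos : 0 < c / 9 * r ^ 2 + (2 * s * c / 9 - 2 * b / 27) * r
      + (2 * s * c / 9 - 2 * b / 27) * s / 2 := by positivity
  constructor
  · have := mul_nonneg (sq_nonneg (r - s)) pos.le
    linarith
  · intro h
    rw [h, sub_self] at e
    rcases mul_eq_zero.1 e.symm with h1 | h1
    · have := pow_eq_zero_iff (two_ne_zero) |>.1 h1
      linarith
    · exact absurd h1 pos.ne'

theorem cubic_aux (x y z r : ℝ) (hr : 0 ≤ r) (h0 : x + y + z = 0)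
    (h2 : x ^ 2 + y ^ 2 + z ^ 2 = 2 / 3 * r ^ 2) :
    x ^ 3 + y ^ 3 + z ^ 3 ≤ 2 / 9 * r ^ 3 := by
  apply le_of_abs_le
  rw [← abs_of_nonneg (show 0 ≤ 2 / 9 * r ^ 3 by positivity)]
  apply sq_le_sq.1
  have hz : z = - x - y := by linarith
  have hr2 : r ^ 2 = 3 / 2 * (x ^ 2 + y ^ 2 + z ^ 2) := by linarith
  have : (2 / 9 * r ^ 3) ^ 2 = 4 / 81 * (r ^ 2) ^ 3 := by ring
  rw [this, hr2, hz]
  have := sq_nonneg ((x - y) * (2 * x + y) * (x + 2 * y))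
  nlinarith

theorem uniax_aux (s : ℝ) (n : Fin 3 → ℝ) (hn : unitVec n) :
    uniax s n ∈ Sym0 ∧ (uniax s n * uniax s n).trace = 2 / 3 * s ^ 2 ∧
    (uniax s n * uniax s n * uniax s n).trace = 2 / 9 * s ^ 3 := by
  unfold unitVec at hn
  rw [Fin.sum_univ_three] at hn
  have hx : n 0 ^ 2 = 1 - n 1 ^ 2 - n 2 ^ 2 := by linarith
  have hP : vecMulVec n n * vecMulVec n n = vecMulVec n n := by
    rw [Matrix.vecMulVec_mul_vecMulVec]
    have : n ⬝ᵥ n = 1 := by simp [dotProduct, Fin.sum_univ_three]; linarith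
    simp [this]
  have ht : (vecMulVec n n).trace = 1 := by
    simp [Matrix.trace, vecMulVec_apply, Fin.sum_univ_three]; linarith
  have hsq : uniax s n * uniax s n =
      s ^ 2 • ((1 / 3 : ℝ) • vecMulVec n n + (1 / 9 : ℝ) • (1 : Mat3)) := by
    unfold uniax
    simp only [Matrix.smul_mul, Matrix.mul_smul, Matrix.sub_mul, Matrix.mul_sub, hP,
      Matrix.mul_one, Matrix.one_mul]
    module
  have hcu : uniax s n * uniax s n * uniax s n =
      s ^ 3 • ((1 / 3 : ℝ) • vecMulVec n n - (1 / 27 : ℝ) • (1 : Mat3)) := by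
    rw [hsq]
    unfold uniax
    simp only [Matrix.smul_mul, Matrix.mul_smul, Matrix.add_mul, Matrix.mul_sub, hP,
      Matrix.mul_one, Matrix.one_mul]
    module
  refine ⟨⟨?_, ?_⟩, ?_, ?_⟩
  · ext i j
    fin_cases i <;> fin_cases j <;> simp [uniax, vecMulVec_apply, mul_comm]
  · simp [uniax, ht]
  · rw [hsq]; simp [ht]; ring
  · rw [hcu]; simp [ht]; ring

theorem roots_aux (s x y z : ℝ) (h0 : x + y + z = 0)
    (h2 : x ^ 2 + y ^ 2 + z ^ 2 = 2 / 3 * s ^ 2)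
    (h3 : x ^ 3 + y ^ 3 + z ^ 3 = 2 / 9 * s ^ 3) : x = 2 * s / 3 ∨ x = -s / 3 := by
  have hz : z = - x - y := by linarith
  subst hz
  have e : (x - 2 * s / 3) * (x + s / 3) ^ 2 = 0 := by
    linear_combination x / 2 * h2 + h3 / 3 
  rcases mul_eq_zero.1 e with h | h
  · left; linarith
  · right
    have := pow_eq_zero_iff (two_ne_zero) |>.1 h
    linarith

theorem pick_aux (s : ℝ) (hs : 0 < s) (d : Fin 3 → ℝ) (h0 : d 0 + d 1 + d 2 = 0)
    (h2 : d 0 ^ 2 + d 1 ^ 2 + d 2 ^ 2 = 2 / 3 * s ^ 2)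
    (h3 : d 0 ^ 3 + d 1 ^ 3 + d 2 ^ 3 = 2 / 9 * s ^ 3) :
    ∃ k, ∀ i, d i = if i = k then 2 * s / 3 else -s / 3 := by
  have r0 := roots_aux s (d 0) (d 1) (d 2) h0 h2 h3
  have r1 := roots_aux s (d 1) (d 0) (d 2) (by linarith) (by linarith) (by linarith)
  have r2 := roots_aux s (d 2) (d 0) (d 1) (by linarith) (by linarith) (by linarith)
  rcases r0 with r0 | r0 <;> rcases r1 with r1 | r1 <;> rcases r2 with r2 | r2 <;>
    first
    | (exfalso; linarith)
    | (refine ⟨0, fun i => ?_⟩; fin_cases i <;> simp [r0, r1, r2] <;> done)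
    | (refine ⟨1, fun i => ?_⟩; fin_cases i <;> simp [r0, r1, r2] <;> done)
    | (refine ⟨2, fun i => ?_⟩; fin_cases i <;> simp [r0, r1, r2] <;> done)

theorem recon_aux (s : ℝ) (U : Mat3) (d : Fin 3 → ℝ) (h : U * Uᵀ = 1) (h' : Uᵀ * U = 1)
    (k : Fin 3) (hd : ∀ i, d i = if i = k then 2 * s / 3 else -s / 3) :
    ∃ n, unitVec n ∧ U * diagonal d * Uᵀ = uniax s n := by
  refine ⟨fun i => U i k, ?_, ?_⟩
  · have := congrFun (congrFun h' k) k
    simp only [Matrix.mul_apply, Matrix.transpose_apply, Matrix.one_apply_eq] at this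
    unfold unitVec
    rw [← this]
    exact Finset.sum_congr rfl fun i _ => by ring
  · have hD : diagonal d = s • diagonal (Pi.single k (1 : ℝ)) - (s / 3) • (1 : Mat3) := by
      ext i j
      by_cases hij : i = j
      · subst hij
        simp [hd, Pi.single_apply]
        split_ifs <;> ring
      · simp [hij]
    have hV : U * diagonal (Pi.single k (1 : ℝ)) * Uᵀ = vecMulVec (fun i => U i k) (fun i => U i k) := by
      ext i j
      rw [Matrix.mul_apply]
      simp [Matrix.mul_diagonal, vecMulVec_apply, Pi.single_apply]
    rw [hD, Matrix.mul_sub, Matrix.sub_mul, Matrix.mul_smul, Matrix.smul_mul, hV,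
      Matrix.mul_smul, Matrix.smul_mul, Matrix.mul_one, h]
    unfold uniax
    module

theorem statement0 (a b c C : ℝ) (ha : 0 < a) (hb : 0 < b) (hc : 0 < c)
    (hC : IsLeast (fLdG a b c C '' Sym0) 0) :
    (∀ Q ∈ Sym0, (fLdG a b c C Q = 0 ↔ ∃ n, unitVec n ∧ Q = uniax (sStar a b c) n)) ∧
    {Q ∈ Sym0 | fLdG a b c C Q = 0} = NsetM (sStar a b c) := by
  set s := sStar a b c with hsdef
  have hac : 0 < a * c := mul_pos ha hc
  have hsq : Real.sqrt (b ^ 2 + 24 * a * c) ^ 2 = b ^ 2 + 24 * a * c :=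
    Real.sq_sqrt (by nlinarith)
  have hsb : b < Real.sqrt (b ^ 2 + 24 * a * c) := Real.lt_sqrt_of_sq_lt (by nlinarith)
  have h4 : 4 * c * s = b + Real.sqrt (b ^ 2 + 24 * a * c) := by
    rw [hsdef, sStar]; field_simp
  have hs : 0 < s := by
    rw [hsdef, sStar]; positivity
  have hp : b < 2 * c * s := by linarith
  have hq : 2 * c * s ^ 2 = b * s + 3 * a := by
    have h5 : Real.sqrt (b ^ 2 + 24 * a * c) = 4 * c * s - b := by linarith
    rw [h5] at hsq
    have : 8 * c * (2 * c * s ^ 2) = 8 * c * (b * s + 3 * a) := by linarith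
    exact mul_left_cancel₀ (by positivity) this
  have hlow : ∀ Q ∈ Sym0, C + hpot a b c s ≤ fLdG a b c C Q ∧
      (fLdG a b c C Q = C + hpot a b c s → ∃ n, unitVec n ∧ Q = uniax s n) := by
    rintro Q ⟨hQ, hQt⟩
    obtain ⟨U, d, hU, hU', hE⟩ := diagonalize_aux Q hQ
    obtain ⟨t1, t2, t3⟩ := traces_aux U d hU' Q hE
    rw [hQt] at t1
    set r := Real.sqrt (3 / 2 * (d 0 ^ 2 + d 1 ^ 2 + d 2 ^ 2)) with hr
    have hr0 : 0 ≤ r := Real.sqrt_nonneg _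
    have hr2 : d 0 ^ 2 + d 1 ^ 2 + d 2 ^ 2 = 2 / 3 * r ^ 2 := by
      rw [hr, Real.sq_sqrt (by positivity)]; ring
    have hcub := cubic_aux _ _ _ r hr0 t1.symm hr2
    obtain ⟨m1, m2⟩ := hpot_aux a b c s r hc hs hr0 hq hp
    have hf : fLdG a b c C Q = C + hpot a b c r +
        b / 3 * (2 / 9 * r ^ 3 - (d 0 ^ 3 + d 1 ^ 3 + d 2 ^ 3)) := by
      unfold fLdG hpot
      rw [t2, t3, hr2]; ring
    have hge : 0 ≤ b / 3 * (2 / 9 * r ^ 3 - (d 0 ^ 3 + d 1 ^ 3 + d 2 ^ 3)) :=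
      mul_nonneg (by positivity) (by linarith)
    refine ⟨by linarith, fun h => ?_⟩
    have hrs : r = s := m2 (by linarith)
    have h0 : b / 3 * (2 / 9 * r ^ 3 - (d 0 ^ 3 + d 1 ^ 3 + d 2 ^ 3)) = 0 := by linarith
    have h3 : d 0 ^ 3 + d 1 ^ 3 + d 2 ^ 3 = 2 / 9 * r ^ 3 := by
      rcases mul_eq_zero.1 h0 with h | h <;> linarith
    rw [hrs] at hr2 h3
    obtain ⟨k, hk⟩ := pick_aux s hs d t1.symm hr2 h3
    rw [hE]
    exact recon_aux s U d hU hU' k hk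
  have huni : ∀ n, unitVec n → fLdG a b c C (uniax s n) = C + hpot a b c s := by
    intro n hn
    obtain ⟨-, u2, u3⟩ := uniax_aux s n hn
    unfold fLdG hpot
    rw [u2, u3]; ring
  have hC0 : C + hpot a b c s = 0 := by
    obtain ⟨⟨Q0, hQ0, hfQ0⟩, hlb⟩ := hC
    have h1 := (hlow Q0 hQ0).1
    have hn : unitVec ![1, 0, 0] := by simp [unitVec, Fin.sum_univ_three]
    have h2 := hlb ⟨_, (uniax_aux s _ hn).1, rfl⟩
    rw [huni _ hn] at h2
    linarith
  have main : ∀ Q ∈ Sym0, (fLdG a b c C Q = 0 ↔ ∃ n, unitVec n ∧ Q = uniax s n) := by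
    intro Q hQ
    constructor
    · intro h
      exact (hlow Q hQ).2 (by rw [h, hC0])
    · rintro ⟨n, hn, rfl⟩
      rw [huni n hn, hC0]
  refine ⟨main, ?_⟩
  ext Q
  constructor
  · rintro ⟨hQ, h⟩
    exact (main Q hQ).1 h
  · rintro ⟨n, hn, rfl⟩
    have := (uniax_aux s n hn).1
    exact ⟨this, (main _ this).2 ⟨n, hn, rfl⟩⟩
end
end

section
/- There exist constants δ₀ > 0 and γ₁ > 0 such that for every Q ∈ Sym₀ with dist(Q, 𝒩) ≤ δ₀ one has f(Q) ≥ γ₁ · dist(Q, 𝒩)². -/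
/- STATEMENT 1: There exist δ₀ > 0 and γ₁ > 0 such that for every Q ∈ Sym₀ with
dist(Q, 𝒩) ≤ δ₀ one has f(Q) ≥ γ₁ · dist(Q, 𝒩)². -/

noncomputable section

open Matrix

/-- Frobenius norm. -/
def frob (A : Mat3) : ℝ := Real.sqrt (∑ i, ∑ j, (A i j) ^ 2)

/-- Frobenius distance from `Q` to 𝒩. -/
def distN (s : ℝ) (Q : Mat3) : ℝ := sInf {d | ∃ P ∈ NsetM s, d = frob (Q - P)}

lemma aux_frob (A : Mat3) : frob A ^ 2 = (Aᵀ * A).trace := by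
  unfold frob
  rw [Real.sq_sqrt (by positivity)]
  simp [Matrix.trace, Matrix.mul_apply, Fin.sum_univ_three]
  ring

lemma aux_diag (Q : Mat3) (hQ : Q.IsSymm) : ∃ (U : Mat3) (l : Fin 3 → ℝ),
    Uᵀ * U = 1 ∧ U * Uᵀ = 1 ∧ Q = U * diagonal l * Uᵀ := by
  have h : Q.IsHermitian := by
    unfold Matrix.IsHermitian
    rw [Matrix.conjTranspose_eq_transpose_of_trivial]; exact hQ
  have hs := h.spectral_theorem
  have h1 := Unitary.coe_star_mul_self h.eigenvectorUnitary
  have h2 := Unitary.coe_mul_star_self h.eigenvectorUnitary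
  refine ⟨(h.eigenvectorUnitary : Mat3), h.eigenvalues, ?_, ?_, ?_⟩
  · rw [← Matrix.conjTranspose_eq_transpose_of_trivial]; exact h1
  · rw [← Matrix.conjTranspose_eq_transpose_of_trivial]; exact h2
  · rw [← Matrix.conjTranspose_eq_transpose_of_trivial]
    rw [Unitary.conjStarAlgAut_apply] at hs
    exact hs

lemma aux_mul (U : Mat3) (h : Uᵀ * U = 1) (l m : Fin 3 → ℝ) :
    (U * diagonal l * Uᵀ) * (U * diagonal m * Uᵀ) = U * diagonal (fun i => l i * m i) * Uᵀ := by
  calc _ = U * diagonal l * (Uᵀ * U) * diagonal m * Uᵀ := by simp only [Matrix.mul_assoc]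
    _ = _ := by rw [h, Matrix.mul_one, Matrix.mul_assoc U, diagonal_mul_diagonal]

lemma aux_tr (U : Mat3) (h : Uᵀ * U = 1) (l : Fin 3 → ℝ) :
    (U * diagonal l * Uᵀ).trace = ∑ i, l i := by
  rw [Matrix.trace_mul_comm, ← Matrix.mul_assoc, h, Matrix.one_mul, trace_diagonal]

lemma aux_uniax (U : Mat3) (h2 : U * Uᵀ = 1) (s : ℝ) (i : Fin 3) :
    uniax s (fun k => U k i) =
      U * diagonal (fun j => s * ((if j = i then 1 else 0) - 1 / 3)) * Uᵀ := by
  have e : diagonal (fun j => s * ((if j = i then (1 : ℝ) else 0) - 1 / 3)) =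
      s • (diagonal (fun j => if j = i then (1 : ℝ) else 0) - (1 / 3 : ℝ) • (1 : Mat3)) := by
    ext j k
    by_cases hjk : j = k
    · subst hjk; simp
    · simp [hjk]
  rw [e, uniax]
  simp only [Matrix.mul_smul, Matrix.smul_mul, Matrix.mul_sub, Matrix.sub_mul, Matrix.mul_one, h2]
  congr 2
  ext j k
  fin_cases i <;> simp [vecMulVec_apply, Matrix.mul_apply, Fin.sum_univ_three, diagonal_apply]

lemma aux_f0 (a b c C u : ℝ) (hC : IsLeast (fLdG a b c C '' Sym0) 0) :
    0 ≤ C - 3 * a * u ^ 2 - 2 * b * u ^ 3 + 9 * c * u ^ 4 := by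
  have hm : (diagonal ![2 * u, -u, -u] : Mat3) ∈ Sym0 := by
    refine ⟨diagonal_transpose _, ?_⟩
    simp [trace_diagonal, Fin.sum_univ_three]; ring
  have := hC.2 ⟨_, hm, rfl⟩
  convert this using 1
  simp only [fLdG, diagonal_mul_diagonal, trace_diagonal, Fin.sum_univ_three]
  simp
  ring

/-- Pure real inequality. -/
lemma aux_real (a b c C u0 u v : ℝ) (hb : 0 < b) (hc : 0 < c) (hu0 : 0 < u0)
    (hbu : b < 6 * c * u0) (hau : a = 6 * c * u0 ^ 2 - b * u0)
    (hC : 0 ≤ C - 3 * a * u0 ^ 2 - 2 * b * u0 ^ 3 + 9 * c * u0 ^ 4)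
    (hu : 12 * c * u0 - b ≤ 12 * c * u) :
    min (c * u0 ^ 2 / 3) (b * u0 / 2) * (6 * (u - u0) ^ 2 + 2 * v ^ 2) ≤
      C - a / 2 * (6 * u ^ 2 + 2 * v ^ 2) - b / 3 * (6 * u ^ 3 - 6 * u * v ^ 2)
        + c / 4 * (6 * u ^ 2 + 2 * v ^ 2) ^ 2 := by
  have hupos : u0 / 2 < u := by
    have : 12 * c * (u0 / 2) < 12 * c * u := by nlinarith
    exact lt_of_mul_lt_mul_left this (by positivity)
  have q1 : 2 * c * u0 ^ 2 ≤ 9 * c * (u + u0) ^ 2 - b * (2 * u + u0) := by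
    have : b * (2 * u + u0) ≤ 6 * c * u0 * (2 * u + u0) :=
      mul_le_mul_of_nonneg_right hbu.le (by linarith)
    have : 0 ≤ c * ((3 * u + u0) ^ 2) := by positivity
    nlinarith
  have q2 : b * u0 ≤ 6 * c * (u ^ 2 - u0 ^ 2) + b * (u0 + 2 * u) := by
    have h1 : (12 * c * u0 - b) * (u + u0) ≤ 12 * c * u * (u + u0) :=
      mul_le_mul_of_nonneg_right hu (by linarith)
    have : 0 < b * (u - u0 / 2) := mul_pos hb (by linarith)
    have : 0 < b * u0 := by positivity
    nlinarith
  have e1 := mul_le_mul_of_nonneg_left q1 (sq_nonneg (u - u0))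
  have e2 := mul_le_mul_of_nonneg_left q2 (sq_nonneg v)
  have m1 := mul_le_mul_of_nonneg_right (min_le_left (c * u0 ^ 2 / 3) (b * u0 / 2))
    (sq_nonneg (u - u0))
  have m2 := mul_le_mul_of_nonneg_right (min_le_right (c * u0 ^ 2 / 3) (b * u0 / 2))
    (sq_nonneg v)
  have p4 : 0 ≤ c * v ^ 4 := by positivity
  subst hau
  generalize min (c * u0 ^ 2 / 3) (b * u0 / 2) = g at *
  linarith

lemma aux_entry (A : Mat3) (ε : ℝ) (h : frob A < ε) (i j : Fin 3) : -ε ≤ A i j ∧ A i j ≤ ε := by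
  apply abs_le.mp
  refine le_trans ?_ h.le
  apply Real.le_sqrt_of_sq_le
  rw [sq_abs]
  refine le_trans (Finset.single_le_sum (f := fun j => A i j ^ 2) (fun _ _ => sq_nonneg _)
    (Finset.mem_univ j)) ?_
  exact Finset.single_le_sum (f := fun i => ∑ j, A i j ^ 2)
    (fun _ _ => Finset.sum_nonneg (fun _ _ => sq_nonneg _)) (Finset.mem_univ i)

lemma aux_quad (A : Mat3) (ε : ℝ) (h : frob A < ε) (n : Fin 3 → ℝ) (hn : unitVec n) :
    -(3 * ε) ≤ n ⬝ᵥ (A *ᵥ n) := by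
  have key : ∀ i j, -(ε * ((n i ^ 2 + n j ^ 2) / 2)) ≤ n i * (A i j * n j) := by
    intro i j
    obtain ⟨h1, h2⟩ := aux_entry A ε h i j
    nlinarith [mul_nonneg (by linarith : 0 ≤ A i j + ε) (sq_nonneg (n i + n j)),
      mul_nonneg (by linarith : 0 ≤ ε - A i j) (sq_nonneg (n i - n j))]
  have : n ⬝ᵥ (A *ᵥ n) = ∑ i, ∑ j, n i * (A i j * n j) := by
    simp [dotProduct, mulVec, Finset.mul_sum]
  rw [this]
  have h2 : ∑ i, ∑ j, -(ε * ((n i ^ 2 + n j ^ 2) / 2)) ≤ ∑ i, ∑ j, n i * (A i j * n j) :=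
    Finset.sum_le_sum fun i _ => Finset.sum_le_sum fun j _ => key i j
  refine le_trans (le_of_eq ?_) h2
  unfold unitVec at hn
  simp only [Fin.sum_univ_three] at hn ⊢
  linear_combination (3 * ε) * hn

lemma aux_quadP (s : ℝ) (n : Fin 3 → ℝ) (hn : unitVec n) :
    n ⬝ᵥ (uniax s n *ᵥ n) = 2 * s / 3 := by
  have h1 : n ⬝ᵥ n = 1 := by
    rw [← hn]; simp [dotProduct, sq]
  simp [uniax, sub_mulVec, smul_mulVec, vecMulVec_mulVec, h1, dotProduct_sub]
  ring

lemma aux_eig (U : Mat3) (l : Fin 3 → ℝ) (h2 : U * Uᵀ = 1) (n : Fin 3 → ℝ)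
    (hn : unitVec n) (m : ℝ) (hm : m ≤ n ⬝ᵥ ((U * diagonal l * Uᵀ) *ᵥ n)) : ∃ i, m ≤ l i := by
  by_contra! hl
  set w := Uᵀ *ᵥ n with hw
  have e1 : n ⬝ᵥ ((U * diagonal l * Uᵀ) *ᵥ n) = ∑ i, l i * w i ^ 2 := by
    rw [← mulVec_mulVec, ← mulVec_mulVec, dotProduct_mulVec, ← mulVec_transpose, ← hw]
    simp [dotProduct, mulVec_diagonal]
    refine Finset.sum_congr rfl fun i _ => by ring
  have e2 : ∑ i, w i ^ 2 = 1 := by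
    have : w ⬝ᵥ w = n ⬝ᵥ n := by
      rw [hw, dotProduct_mulVec, ← mulVec_transpose, transpose_transpose, mulVec_mulVec, h2,
        one_mulVec]
    have hn' : n ⬝ᵥ n = 1 := by
      rw [← hn]; simp [dotProduct, sq]
    rw [← hn', ← this]; simp [dotProduct, sq]
  rw [e1] at hm
  simp only [Fin.sum_univ_three] at e2 hm
  have t : ∀ i, 0 ≤ (m - l i) * w i ^ 2 := fun i =>
    mul_nonneg (by linarith [hl i]) (sq_nonneg _)
  have z : ∀ i, (m - l i) * w i ^ 2 = 0 := by
    intro i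
    have h0 := t 0
    have h1 := t 1
    have h2 := t 2
    have hsum : (m - l 0) * w 0 ^ 2 + (m - l 1) * w 1 ^ 2 + (m - l 2) * w 2 ^ 2 ≤ 0 := by
      have : m * (w 0 ^ 2 + w 1 ^ 2 + w 2 ^ 2) = m := by rw [e2, mul_one]
      linarith
    fin_cases i
    · exact le_antisymm (by change (m - l 0) * w 0 ^ 2 ≤ 0; linarith) h0
    · exact le_antisymm (by change (m - l 1) * w 1 ^ 2 ≤ 0; linarith) h1
    · exact le_antisymm (by change (m - l 2) * w 2 ^ 2 ≤ 0; linarith) h2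
  have z' : ∀ i, w i ^ 2 = 0 := fun i =>
    (mul_eq_zero.mp (z i)).resolve_left (by linarith [hl i])
  rw [z' 0, z' 1, z' 2] at e2
  norm_num at e2

theorem statement1 (a b c C : ℝ) (ha : 0 < a) (hb : 0 < b) (hc : 0 < c)
    (hC : IsLeast (fLdG a b c C '' Sym0) 0) :
    ∃ δ₀ > (0 : ℝ), ∃ γ₁ > (0 : ℝ), ∀ Q ∈ Sym0,
      distN (sStar a b c) Q ≤ δ₀ →
        γ₁ * (distN (sStar a b c) Q) ^ 2 ≤ fLdG a b c C Q := by
  obtain ⟨u0, hs⟩ : ∃ u0, sStar a b c = 3 * u0 := ⟨sStar a b c / 3, by ring⟩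
  have hr : 12 * c * u0 = b + Real.sqrt (b ^ 2 + 24 * a * c) := by
    have : 12 * c * u0 = 4 * c * sStar a b c := by rw [hs]; ring
    rw [this, sStar]; field_simp
  have hsq := Real.sq_sqrt (by positivity : 0 ≤ b ^ 2 + 24 * a * c)
  have hsn := Real.sqrt_nonneg (b ^ 2 + 24 * a * c)
  have hu0 : 0 < u0 := by
    have : 0 < 12 * c * u0 := by rw [hr]; linarith
    exact pos_of_mul_pos_right this (by positivity)
  have hau : a = 6 * c * u0 ^ 2 - b * u0 := by
    have h : Real.sqrt (b ^ 2 + 24 * a * c) = 12 * c * u0 - b := by linarith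
    rw [h] at hsq
    have : 24 * c * (6 * c * u0 ^ 2 - b * u0 - a) = 0 := by linear_combination hsq
    have := (mul_eq_zero.mp this).resolve_left (by positivity)
    linarith
  have hbu : b < 6 * c * u0 := by
    have : b * u0 < 6 * c * u0 * u0 := by nlinarith
    exact lt_of_mul_lt_mul_right this hu0.le
  rw [hs]
  refine ⟨b / (36 * c), by positivity, min (c * u0 ^ 2 / 3) (b * u0 / 2), by positivity, ?_⟩
  rintro Q ⟨hQ, hQt⟩ hd
  have hlt : distN (3 * u0) Q < b / (18 * c) := by
    refine lt_of_le_of_lt hd ?_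
    have : b / (18 * c) = b / (36 * c) + b / (36 * c) := by field_simp; ring
    have : 0 < b / (36 * c) := by positivity
    linarith
  have hne : {d | ∃ P ∈ NsetM (3 * u0), d = frob (Q - P)}.Nonempty :=
    ⟨_, _, ⟨![1, 0, 0], by simp [unitVec, Fin.sum_univ_three], rfl⟩, rfl⟩
  obtain ⟨d, ⟨P, ⟨n, hn, rfl⟩, rfl⟩, hlt⟩ := exists_lt_of_csInf_lt hne hlt
  obtain ⟨U, l, h1, h2, rfl⟩ := aux_diag Q hQ
  have hq := aux_quad _ _ hlt n hn
  rw [sub_mulVec, dotProduct_sub, aux_quadP _ _ hn] at hq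
  obtain ⟨i, hi⟩ := aux_eig U l h2 n hn (2 * u0 - 3 * (b / (18 * c))) (by linarith)
  have hi' : 12 * c * u0 - b ≤ 12 * c * (l i / 2) := by
    have := mul_le_mul_of_nonneg_left hi (by positivity : 0 ≤ 6 * c)
    have e : 6 * c * (2 * u0 - 3 * (b / (18 * c))) = 12 * c * u0 - b := by field_simp; ring
    linarith
  have hcol : unitVec (fun k => U k i) := by
    have := congrFun (congrFun h1 i) i
    simp [Matrix.mul_apply] at this
    simp [unitVec, sq, this]
  have hle : distN (3 * u0) (U * diagonal l * Uᵀ) ≤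
      frob (U * diagonal l * Uᵀ - uniax (3 * u0) (fun k => U k i)) := by
    refine csInf_le ⟨0, ?_⟩ ⟨_, ⟨_, hcol, rfl⟩, rfl⟩
    rintro _ ⟨_, _, rfl⟩
    exact Real.sqrt_nonneg _
  have h0 : 0 ≤ distN (3 * u0) (U * diagonal l * Uᵀ) := by
    refine le_csInf hne ?_
    rintro _ ⟨_, _, rfl⟩
    exact Real.sqrt_nonneg _
  have hle2 := pow_le_pow_left₀ h0 hle 2
  have hD : U * diagonal l * Uᵀ - uniax (3 * u0) (fun k => U k i) =
      U * diagonal (fun j => l j - 3 * u0 * ((if j = i then 1 else 0) - 1 / 3)) * Uᵀ := by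
    rw [aux_uniax U h2, ← Matrix.sub_mul, ← Matrix.mul_sub, diagonal_sub]
  have hT : ∀ m : Fin 3 → ℝ, (U * diagonal m * Uᵀ)ᵀ = U * diagonal m * Uᵀ := by
    intro m
    simp [Matrix.transpose_mul, Matrix.mul_assoc]
  rw [hD, aux_frob, hT, aux_mul U h1, aux_tr U h1] at hle2
  rw [aux_tr U h1] at hQt
  refine le_trans (mul_le_mul_of_nonneg_left hle2 (by positivity)) ?_
  unfold fLdG
  rw [aux_mul U h1, aux_mul U h1, aux_tr U h1, aux_tr U h1]
  have hf := aux_f0 a b c C u0 hC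
  obtain ⟨v, hv1, hv2⟩ : ∃ v, (∑ j, l j ^ 2 = 6 * (l i / 2) ^ 2 + 2 * v ^ 2 ∧
      ∑ j, l j ^ 3 = 6 * (l i / 2) ^ 3 - 6 * (l i / 2) * v ^ 2) ∧
      ∑ j, (l j - 3 * u0 * ((if j = i then 1 else 0) - 1 / 3)) ^ 2 =
        6 * (l i / 2 - u0) ^ 2 + 2 * v ^ 2 := by
    simp only [Fin.sum_univ_three] at hQt ⊢
    fin_cases i
    · have : l 0 = - l 1 - l 2 := by linarith
      refine ⟨(l 1 - l 2) / 2, ⟨?_, ?_⟩, ?_⟩ <;> simp [this] <;> ring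
    · have : l 1 = - l 0 - l 2 := by linarith
      refine ⟨(l 0 - l 2) / 2, ⟨?_, ?_⟩, ?_⟩ <;> simp [this] <;> ring
    · have : l 2 = - l 0 - l 1 := by linarith
      refine ⟨(l 0 - l 1) / 2, ⟨?_, ?_⟩, ?_⟩ <;> simp [this] <;> ring
  have := aux_real a b c C u0 (l i / 2) v hb hc hu0 hbu hau hf hi'
  rw [← hv2, ← hv1.1, ← hv1.2] at this
  simpa only [pow_succ, pow_zero, one_mul] using this
end
end

section
/- There exists a constant C₁ > 0 such that for every Q ∈ Sym₀ one has f(Q) ≥ C₁ ( |Q|² − (2/3)s*² )². -/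
/- STATEMENT 2: There exists C₁ > 0 such that for every Q ∈ Sym₀,
f(Q) ≥ C₁ ( |Q|² − (2/3)s*² )², where |Q|² = tr(Q²). -/

noncomputable section

open Matrix

theorem aux_conj (D : Mat3) (U V : Mat3) (hVU : V * U = 1) :
    (U * D * V).trace = D.trace := by
  rw [Matrix.trace_mul_comm, ← Matrix.mul_assoc, hVU, Matrix.one_mul]

theorem aux_disc (Q : Mat3) (hQ : Q ∈ Sym0) :
    6 * ((Q * Q * Q).trace) ^ 2 ≤ ((Q * Q).trace) ^ 3 := by
  obtain ⟨hs, ht⟩ := hQ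
  have hH : Q.IsHermitian := by
    rw [Matrix.IsHermitian, Matrix.conjTranspose_eq_transpose_of_trivial]; exact hs
  obtain ⟨U, V, d, hVU, hd⟩ : ∃ (U V : Mat3) (d : Fin 3 → ℝ), V * U = 1 ∧
      Q = U * Matrix.diagonal d * V := by
    refine ⟨hH.eigenvectorUnitary, star (hH.eigenvectorUnitary : Mat3), hH.eigenvalues, ?_, ?_⟩
    · exact Unitary.coe_star_mul_self _
    · have := hH.spectral_theorem
      rw [Unitary.conjStarAlgAut_apply] at this
      exact this
  have h2 : Q * Q = U * (Matrix.diagonal d * Matrix.diagonal d) * V := by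
    rw [hd]
    calc _ = U * Matrix.diagonal d * (V * U) * Matrix.diagonal d * V := by
            simp only [Matrix.mul_assoc]
      _ = _ := by rw [hVU]; simp only [Matrix.mul_assoc, Matrix.one_mul]
  have h3 : Q * Q * Q = U * (Matrix.diagonal d * Matrix.diagonal d * Matrix.diagonal d) * V := by
    rw [h2, hd]
    calc _ = U * (Matrix.diagonal d * Matrix.diagonal d) * (V * U) * Matrix.diagonal d * V := by
            simp only [Matrix.mul_assoc]
      _ = _ := by rw [hVU]; simp only [Matrix.mul_assoc, Matrix.one_mul]
  rw [h3, h2, aux_conj _ _ _ hVU, aux_conj _ _ _ hVU]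
  rw [hd, aux_conj _ _ _ hVU] at ht
  simp only [Matrix.diagonal_mul_diagonal, Matrix.trace_diagonal, Fin.sum_univ_three] at *
  have hz : d 2 = - d 0 - d 1 := by linarith
  rw [hz]
  nlinarith [sq_nonneg ((d 0 - d 1) * (d 1 - (- d 0 - d 1)) * ((- d 0 - d 1) - d 0))]

theorem statement2 (a b c C : ℝ) (ha : 0 < a) (hb : 0 < b) (hc : 0 < c)
    (hC : IsLeast (fLdG a b c C '' Sym0) 0) :
    ∃ C₁ > (0 : ℝ), ∀ Q ∈ Sym0,
      C₁ * ((Q * Q).trace - 2 / 3 * (sStar a b c) ^ 2) ^ 2 ≤ fLdG a b c C Q := by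
  set s := sStar a b c with hsdef
  have hs2 : 2 * c * s ^ 2 = b * s + 3 * a := by
    have hq := Real.sq_sqrt (show 0 ≤ b ^ 2 + 24 * a * c by positivity)
    rw [hsdef, sStar]
    generalize Real.sqrt (b ^ 2 + 24 * a * c) = w at hq ⊢
    field_simp
    nlinarith
  have hs0 : 0 < s := by rw [hsdef, sStar]; positivity
  have hsb : b < 2 * c * s := by
    by_contra hcon
    push Not at hcon
    nlinarith
  have hC0 : a * s ^ 2 / 3 + 2 * b * s ^ 3 / 27 - c * s ^ 4 / 9 ≤ C := by
    have hmem : (Matrix.diagonal ![2 * s / 3, - s / 3, - s / 3] : Mat3) ∈ Sym0 := by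
      refine ⟨Matrix.isSymm_diagonal _, ?_⟩
      simp [Matrix.trace_diagonal, Fin.sum_univ_three]
      ring
    have := hC.2 ⟨_, hmem, rfl⟩
    simp [fLdG, Matrix.diagonal_mul_diagonal, Matrix.trace_diagonal, Fin.sum_univ_three] at this
    nlinarith
  set B := (6 * c * s - 2 * b) / 27 with hB
  have hBpos : 0 < B := by rw [hB]; apply div_pos <;> nlinarith
  set m := min (c / 9) (B / (2 * s)) with hm
  have hmpos : 0 < m := by rw [hm]; apply lt_min <;> positivity
  have hm1 : m ≤ c / 9 := min_le_left _ _
  have hm2 : m * s ^ 2 ≤ B * s / 2 := by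
    have : m ≤ B / (2 * s) := min_le_right _ _
    rw [le_div_iff₀ (by positivity)] at this
    nlinarith
  refine ⟨9 / 8 * m, by positivity, fun Q hQ => ?_⟩
  have hd := aux_disc Q hQ
  have ht0 : 0 ≤ (Q * Q).trace := by
    have h := hQ.1
    have h1 : Q * Q = Qᵀ * Q := by rw [h.eq]
    rw [h1]
    simp only [Matrix.trace, Matrix.diag, Matrix.mul_apply, Matrix.transpose_apply]
    exact Finset.sum_nonneg fun i _ => Finset.sum_nonneg fun j _ => mul_self_nonneg _
  rw [fLdG]
  generalize (Q * Q * Q).trace = u at *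
  generalize (Q * Q).trace = t at *
  obtain ⟨r, hr0, hr⟩ : ∃ r : ℝ, 0 ≤ r ∧ t = 2 / 3 * r ^ 2 :=
    ⟨Real.sqrt (3 / 2 * t), Real.sqrt_nonneg _, by
      rw [Real.sq_sqrt (by positivity)]; ring⟩
  subst hr
  have hu : u ≤ 2 * r ^ 3 / 9 := by
    refine abs_le_of_sq_le_sq' ?_ (by positivity) |>.2
    nlinarith
  have hbu : b * u ≤ b * (2 * r ^ 3 / 9) := mul_le_mul_of_nonneg_left hu hb.le
  have key : m / 2 * (r + s) ^ 2 ≤ c / 9 * r ^ 2 + B * r + B * s / 2 := by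
    have e1 : m * r ^ 2 ≤ c / 9 * r ^ 2 := mul_le_mul_of_nonneg_right hm1 (sq_nonneg r)
    have e2 : 0 ≤ B * r := by positivity
    have e3 : 0 ≤ m * (r - s) ^ 2 := by positivity
    nlinarith
  have key2 := mul_le_mul_of_nonneg_right key (sq_nonneg (r - s))
  have hfac : (c / 9 * r ^ 2 + B * r + B * s / 2) * (r - s) ^ 2
      = (a * s ^ 2 / 3 + 2 * b * s ^ 3 / 27 - c * s ^ 4 / 9)
        - a * r ^ 2 / 3 - 2 * b * r ^ 3 / 27 + c * r ^ 4 / 9 := by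
    have ha' : a = (2 * c * s ^ 2 - b * s) / 3 := by linarith
    rw [hB, ha']; ring
  rw [hfac] at key2
  nlinarith
end
end

section
/- There exist constants C₁, C₂ > 0 such that for every Q ∈ Sym₀ the radial derivative of f satisfies Df(Q):Q ≥ C₁|Q|⁴ − C₂, where Df(Q):Q = −a·tr(Q²) − b·tr(Q³) + c·(tr(Q²))² is the derivative of f at Q applied to Q itself. -/
/- STATEMENT 3: There exist C₁, C₂ > 0 such that for every Q ∈ Sym₀,
Df(Q):Q = −a·tr(Q²) − b·tr(Q³) + c·(tr(Q²))² ≥ C₁|Q|⁴ − C₂, where |Q|⁴ = (tr(Q²))². -/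

noncomputable section

open Matrix

theorem key_cubic (b c : ℝ) (Q : Mat3) (hQ : Q ∈ Sym0) :
    2 * b * c * (Q * Q * Q).trace ≤
      c ^ 2 * ((Q * Q).trace ^ 2 / 2) + b ^ 2 * (Q * Q).trace := by
  obtain ⟨hs, ht⟩ := hQ
  have h10 : Q 1 0 = Q 0 1 := hs.apply 0 1
  have h20 : Q 2 0 = Q 0 2 := hs.apply 0 2
  have h21 : Q 2 1 = Q 1 2 := hs.apply 1 2
  simp only [Matrix.trace, Matrix.diag, Fin.sum_univ_three, Matrix.mul_apply] at ht ⊢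
  rw [h10, h20, h21]
  have h22 : Q 2 2 = -Q 0 0 - Q 1 1 := by linarith
  rw [h22]
  generalize Q 0 0 = p
  generalize Q 1 1 = q
  generalize Q 0 1 = r
  generalize Q 0 2 = s
  generalize Q 1 2 = t
  linarith [sq_nonneg (c * (p*p+r*r+s*s) - b * p),
    sq_nonneg (c * (r*r+q*q+t*t) - b * q),
    sq_nonneg (c * (s*s+t*t+(-p-q)*(-p-q)) - b * (-p-q)),
    sq_nonneg (c * (p*r+r*q+s*t) - b * r),
    sq_nonneg (c * (p*s+r*t+s*(-p-q)) - b * s),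
    sq_nonneg (c * (r*s+q*t+t*(-p-q)) - b * t)]

theorem statement3 (a b c : ℝ) (ha : 0 < a) (hb : 0 < b) (hc : 0 < c) :
    ∃ C₁ > (0 : ℝ), ∃ C₂ > (0 : ℝ), ∀ Q ∈ Sym0,
      C₁ * ((Q * Q).trace) ^ 2 - C₂ ≤
        -a * (Q * Q).trace - b * (Q * Q * Q).trace + c * ((Q * Q).trace) ^ 2 := by
  have hK : 0 < a + b ^ 2 / (2 * c) := by positivity
  refine ⟨c / 4, by positivity, (a + b ^ 2 / (2 * c)) ^ 2 / (2 * c), by positivity, ?_⟩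
  intro Q hQ
  have h := key_cubic b c Q hQ
  generalize (Q * Q * Q).trace = y at *
  generalize (Q * Q).trace = x at *
  have h1 : b * y ≤ c * x ^ 2 / 4 + b ^ 2 / (2 * c) * x := by
    have e : c * x ^ 2 / 4 + b ^ 2 / (2 * c) * x - b * y
        = (c ^ 2 * (x ^ 2 / 2) + b ^ 2 * x - 2 * b * c * y) / (2 * c) := by
      field_simp
      ring
    have : 0 ≤ (c ^ 2 * (x ^ 2 / 2) + b ^ 2 * x - 2 * b * c * y) / (2 * c) :=
      div_nonneg (by linarith) (by positivity)
    linarith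
  have h2 : (a + b ^ 2 / (2 * c)) * x ≤ c / 2 * x ^ 2 + (a + b ^ 2 / (2 * c)) ^ 2 / (2 * c) := by
    generalize a + b ^ 2 / (2 * c) = K
    have e : c / 2 * x ^ 2 + K ^ 2 / (2 * c) - K * x = (c * x - K) ^ 2 / (2 * c) := by
      field_simp
      ring
    have : 0 ≤ (c * x - K) ^ 2 / (2 * c) := by positivity
    linarith
  linarith
end
end

section
/- Let s* > 0 and let Q ∈ Sym₀ have a simple largest eigenvalue, with n a unit eigenvector for the largest eigenvalue. Then R(Q) := s*( n⊗n − (1/3)I ) is the unique nearest point of 𝒩 to Q in the Frobenius distance: for every P ∈ 𝒩 with P ≠ R(Q) one has |Q − R(Q)| < |Q − P|. -/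
/- STATEMENT 5: Let s* > 0 and let Q ∈ Sym₀ have a simple largest eigenvalue, with n
a unit eigenvector for the largest eigenvalue. Then R(Q) = s*(n⊗n − (1/3)I) is the
unique nearest point of 𝒩 to Q in Frobenius distance: for every P ∈ 𝒩 with P ≠ R(Q),
|Q − R(Q)| < |Q − P|. -/

noncomputable section

open Matrix

def IsEigen (Q : Mat3) (μ : ℝ) (v : Fin 3 → ℝ) : Prop := Q.mulVec v = μ • v

/-- `n` is a unit eigenvector of `Q` for the largest eigenvalue `lam`. -/
def MaxEigen (Q : Mat3) (lam : ℝ) (n : Fin 3 → ℝ) : Prop :=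
  unitVec n ∧ IsEigen Q lam n ∧
    ∀ (μ : ℝ) (v : Fin 3 → ℝ), v ≠ 0 → IsEigen Q μ v → μ ≤ lam

/-- The largest eigenvalue `lam` of `Q` is simple, with unit eigenvector `n`. -/
def SimpleMaxEigen (Q : Mat3) (lam : ℝ) (n : Fin 3 → ℝ) : Prop :=
  MaxEigen Q lam n ∧ ∀ v : Fin 3 → ℝ, IsEigen Q lam v → ∃ t : ℝ, v = t • n

theorem aux_psd (Q : Mat3) (hQ : Q.IsSymm) (lam : ℝ)
    (h : ∀ (μ : ℝ) (v : Fin 3 → ℝ), v ≠ 0 → IsEigen Q μ v → μ ≤ lam) :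
    (lam • (1 : Mat3) - Q).PosSemidef := by
  have hB : (lam • (1 : Mat3) - Q).IsHermitian := by
    ext i j
    have := hQ.apply i j
    simp [Matrix.one_apply, this, eq_comm]
  rw [hB.posSemidef_iff_eigenvalues_nonneg]
  intro i
  have h1 := hB.mulVec_eigenvectorBasis i
  have h2 : (hB.eigenvectorBasis i).ofLp ≠ 0 := by
    intro h0
    have := hB.eigenvectorBasis.orthonormal.ne_zero i
    apply this
    ext j
    exact congrFun h0 j
  have h3 := h (lam - hB.eigenvalues i) _ h2 (by
    unfold IsEigen
    rw [Matrix.sub_mulVec, Matrix.smul_mulVec, Matrix.one_mulVec] at h1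
    rw [sub_smul, ← h1]
    simp)
  show (0:ℝ) ≤ _
  linarith

theorem aux_frob_s5 (s : ℝ) (Q : Mat3) (hQ : Q.trace = 0) (v : Fin 3 → ℝ) (hv : unitVec v) :
    ∑ i, ∑ j, ((Q - uniax s v) i j) ^ 2 =
      ∑ i, ∑ j, (Q i j) ^ 2 - 2 * s * (v ⬝ᵥ Q *ᵥ v) + s ^ 2 * (2 / 3) := by
  simp only [unitVec, Matrix.trace, Fin.sum_univ_three, Matrix.diag] at hv hQ
  simp [uniax, Fin.sum_univ_three, Matrix.vecMulVec_apply, Matrix.one_apply, dotProduct,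
    Matrix.mulVec]
  have h0 : v 0 ^ 2 = 1 - v 1 ^ 2 - v 2 ^ 2 := by linarith
  linear_combination (2 * s / 3) * hQ + s ^ 2 * (v 0 ^ 2 + v 1 ^ 2 + v 2 ^ 2 + 1 - 2 / 3) * hv

theorem statement5 (sS : ℝ) (hs : 0 < sS) (Q : Mat3) (hQ : Q ∈ Sym0)
    (lam : ℝ) (n : Fin 3 → ℝ) (h : SimpleMaxEigen Q lam n) :
    ∀ P ∈ NsetM sS, P ≠ uniax sS n → frob (Q - uniax sS n) < frob (Q - P) := by
  rintro P ⟨v, hv, rfl⟩ hne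
  obtain ⟨⟨hn, hen, hmax⟩, hsimp⟩ := h
  have hpsd := aux_psd Q hQ.1 lam hmax
  have hvv : v ⬝ᵥ v = 1 := by
    simp only [unitVec, Fin.sum_univ_three] at hv
    simp only [dotProduct, Fin.sum_univ_three]
    linarith
  have hnn : n ⬝ᵥ n = 1 := by
    simp only [unitVec, Fin.sum_univ_three] at hn
    simp only [dotProduct, Fin.sum_univ_three]
    linarith
  have hnQ : n ⬝ᵥ Q *ᵥ n = lam := by
    rw [show Q *ᵥ n = lam • n from hen, dotProduct_smul, hnn]; simp
  have hB : (lam • (1 : Mat3) - Q) *ᵥ v = lam • v - Q *ᵥ v := by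
    rw [Matrix.sub_mulVec, Matrix.smul_mulVec, Matrix.one_mulVec]
  have hq : star v ⬝ᵥ (lam • (1 : Mat3) - Q) *ᵥ v = lam - v ⬝ᵥ Q *ᵥ v := by
    rw [hB, star_trivial, dotProduct_sub, dotProduct_smul, hvv]; simp
  have hle := hpsd.dotProduct_mulVec_nonneg v
  have hlt : v ⬝ᵥ Q *ᵥ v < lam := by
    rw [hq] at hle
    rcases (sub_nonneg.mp hle).lt_or_eq with h1 | h1
    · exact h1
    · exfalso
      have h2 := (hpsd.dotProduct_mulVec_zero_iff v).mp (by rw [hq, h1, sub_self])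
      rw [hB, sub_eq_zero] at h2
      obtain ⟨t, rfl⟩ := hsimp v h2.symm
      apply hne
      have ht : t * t = 1 := by simpa [hnn] using hvv
      unfold uniax
      rw [Matrix.smul_vecMulVec, Matrix.vecMulVec_smul, smul_smul, ht, one_smul]
  unfold frob
  apply Real.sqrt_lt_sqrt (by positivity)
  rw [aux_frob_s5 sS Q hQ.2 n hn, aux_frob_s5 sS Q hQ.2 v hv, hnQ]
  have := mul_lt_mul_of_pos_left hlt hs
  linarith
end
end

section
/- There exist constants t₀, C > 0 such that for every t ∈ (0, t₀] the function Q ↦ f(Q) + t·g(Q) attains a unique global minimum on Sym₀; the minimizer has the form s'·( e₃⊗e₃ − (1/3)I ) for some s' ∈ ℝ with |s' − s*| ≤ C·t, and the minimum value m(t) := min_{Q∈Sym₀} ( f(Q) + t·g(Q) ) satisfies −C·t² ≤ m(t) ≤ 0. -/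
/- STATEMENT 6: There exist t₀, C > 0 such that for every t ∈ (0, t₀] the function
Q ↦ f(Q) + t·g(Q) attains a unique global minimum on Sym₀; the minimizer has the form
s'·(e₃⊗e₃ − (1/3)I) with |s' − s*| ≤ C·t, and the minimum value m(t) satisfies
−C·t² ≤ m(t) ≤ 0. Here g(Q) = (2/3)s* − Q₃₃. -/

noncomputable section

open Matrix

/-- The magnetic potential g(Q) = (2/3)s* − Q₃₃. -/
def gMag (sS : ℝ) (Q : Mat3) : ℝ := 2 / 3 * sS - Q 2 2

/-- e₃ = (0,0,1). -/
def e3 : Fin 3 → ℝ := fun i => if i = 2 then 1 else 0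

def FF (a b c C s : ℝ) : ℝ := C - a * s ^ 2 / 3 - 2 * b * s ^ 3 / 27 + c * s ^ 4 / 9

lemma FF_id (a b c C σ s : ℝ) (h : 2 * c * σ ^ 2 = b * σ + 3 * a) :
    FF a b c C s = FF a b c C σ +
      (s - σ) ^ 2 / 9 * (c * s ^ 2 + (2 * c * σ - 2 * b / 3) * s + (2 * c * σ - 2 * b / 3) * σ / 2) := by
  have ha : a = (2 * c * σ ^ 2 - b * σ) / 3 := by linarith
  subst ha
  unfold FF; ring

lemma FF_id2 (a b c C σ u : ℝ) (h : 2 * c * σ ^ 2 = b * σ + 3 * a) :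
    FF a b c C (σ + u) = FF a b c C σ +
      (σ * (4 * c * σ - b) / 9) * u ^ 2 + ((12 * c * σ - 2 * b) / 27) * u ^ 3 + c / 9 * u ^ 4 := by
  have ha : a = (2 * c * σ ^ 2 - b * σ) / 3 := by linarith
  subst ha
  unfold FF; ring

lemma sStar_eq (a b c : ℝ) (ha : 0 < a) (hb : 0 < b) (hc : 0 < c) :
    0 < sStar a b c ∧ 2 * c * (sStar a b c) ^ 2 = b * sStar a b c + 3 * a ∧
      b < 2 * c * sStar a b c := by
  have h1 : 0 ≤ b ^ 2 + 24 * a * c := by positivity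
  have h2 := Real.sq_sqrt h1
  have h3 : b < Real.sqrt (b ^ 2 + 24 * a * c) := by
    apply Real.lt_sqrt_of_sq_lt
    have : 0 < a * c := by positivity
    linarith
  unfold sStar
  set r := Real.sqrt (b ^ 2 + 24 * a * c)
  refine ⟨by positivity, ?_, ?_⟩
  · field_simp
    nlinarith
  · field_simp
    linarith

lemma exists_root (A B D t : ℝ) (hA : 0 < A) (hB : 0 < B) (hD : 0 < D) (ht : 0 < t) :
    ∃ u : ℝ, 0 ≤ u ∧ 2 * A * u + 3 * B * u ^ 2 + 4 * D * u ^ 3 = 2 / 3 * t ∧ u ≤ 1 / (3 * A) * t := by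
  have hc : ContinuousOn (fun u : ℝ => 2 * A * u + 3 * B * u ^ 2 + 4 * D * u ^ 3)
      (Set.Icc 0 (1 / (3 * A) * t)) := by fun_prop
  have h0 : 0 ≤ 1 / (3 * A) * t := by positivity
  have := intermediate_value_Icc h0 hc
  have hm : 2 / 3 * t ∈ Set.Icc ((fun u : ℝ => 2 * A * u + 3 * B * u ^ 2 + 4 * D * u ^ 3) 0)
      ((fun u : ℝ => 2 * A * u + 3 * B * u ^ 2 + 4 * D * u ^ 3) (1 / (3 * A) * t)) := by
    constructor
    · simp; positivity
    · have e : 2 * A * (1 / (3 * A) * t) = 2 / 3 * t := by field_simp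
      have : 0 ≤ 3 * B * (1 / (3 * A) * t) ^ 2 + 4 * D * (1 / (3 * A) * t) ^ 3 := by positivity
      show _ ≤ 2 * A * (1 / (3 * A) * t) + _ + _
      linarith
  obtain ⟨u, hu, he⟩ := this hm
  exact ⟨u, hu.1, he, hu.2⟩

lemma scalar (a b c C σ : ℝ) (ha : 0 < a) (hb : 0 < b) (hc : 0 < c) (hσ : 0 < σ)
    (h : 2 * c * σ ^ 2 = b * σ + 3 * a) (hbc : b < 2 * c * σ) (h0 : FF a b c C σ = 0) :
    ∃ K > (0 : ℝ), ∀ t : ℝ, 0 < t → ∃ s' : ℝ, 0 ≤ s' ∧ |s' - σ| ≤ K * t ∧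
      (∀ s, 0 ≤ s → s ≠ s' → FF a b c C s' + 2 / 3 * t * (σ - s') < FF a b c C s + 2 / 3 * t * (σ - s)) ∧
      - K * t ^ 2 ≤ FF a b c C s' + 2 / 3 * t * (σ - s') ∧
      FF a b c C s' + 2 / 3 * t * (σ - s') ≤ 0 := by
  have hA : 0 < σ * (4 * c * σ - b) / 9 := by
    have : 0 < 4 * c * σ - b := by nlinarith
    positivity
  have hB : 0 < (12 * c * σ - 2 * b) / 27 := by
    have : 0 < c * σ := by positivity
    linarith
  have hD : 0 < c / 9 := by positivity
  have id2 := fun u => FF_id2 a b c C σ u h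
  rw [h0] at id2
  set A := σ * (4 * c * σ - b) / 9
  set B := (12 * c * σ - 2 * b) / 27
  set D := c / 9
  refine ⟨1 / (3 * A), by positivity, fun t ht => ?_⟩
  obtain ⟨u, hu0, hu, huK⟩ := exists_root A B D t hA hB hD ht
  have hval : FF a b c C (σ + u) + 2 / 3 * t * (σ - (σ + u)) =
      -(A * u ^ 2 + 2 * B * u ^ 3 + 3 * D * u ^ 4) := by
    rw [id2, ← hu]; ring
  have hle : FF a b c C (σ + u) + 2 / 3 * t * (σ - (σ + u)) ≤ 0 := by
    rw [hval]
    have : 0 ≤ A * u ^ 2 + 2 * B * u ^ 3 + 3 * D * u ^ 4 := by positivity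
    linarith
  refine ⟨σ + u, by positivity, ?_, ?_, ?_, hle⟩
  · rw [add_sub_cancel_left, abs_of_nonneg hu0]; exact huK
  · intro s hs hne
    rcases lt_or_ge s σ with hlt | hge
    · refine lt_of_le_of_lt hle ?_
      have hP : 0 < 2 * c * σ - 2 * b / 3 := by linarith
      have h1 := FF_id a b c C σ s h
      have h2 : 0 ≤ FF a b c C s := by rw [h1, h0]; positivity
      have : 0 < 2 / 3 * t * (σ - s) := by
        have : 0 < σ - s := by linarith
        positivity
      linarith
    · obtain ⟨v, rfl⟩ : ∃ v, s = σ + v := ⟨s - σ, by ring⟩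
      have hv : 0 ≤ v := by linarith
      have hne' : v - u ≠ 0 := fun e => hne (by linarith)
      have : (FF a b c C (σ + v) + 2 / 3 * t * (σ - (σ + v))) -
          (FF a b c C (σ + u) + 2 / 3 * t * (σ - (σ + u))) =
          (v - u) ^ 2 * (A + B * (v + 2 * u) + D * (v ^ 2 + 2 * v * u + 3 * u ^ 2)) := by
        rw [id2, id2, ← hu]; ring
      have hp : 0 < (v - u) ^ 2 * (A + B * (v + 2 * u) + D * (v ^ 2 + 2 * v * u + 3 * u ^ 2)) := by
        positivity
      linarith
  · rw [id2]
    have h1 : 0 ≤ A * u ^ 2 + B * u ^ 3 + D * u ^ 4 := by positivity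
    have h2 : t * u ≤ t * (1 / (3 * A) * t) := by gcongr
    have h3 : 0 ≤ t * (1 / (3 * A) * t) := by positivity
    nlinarith

lemma quad_bound (x y z u v w s p q r : ℝ) (hz : x + y + z = 0) (hs : 0 ≤ s)
    (h2 : x ^ 2 + y ^ 2 + z ^ 2 + 2 * (u ^ 2 + v ^ 2 + w ^ 2) = 2 * s ^ 2 / 3) :
    x * p ^ 2 + y * q ^ 2 + z * r ^ 2 + 2 * (u * p * q + v * p * r + w * q * r)
      ≤ 2 / 3 * s * (p ^ 2 + q ^ 2 + r ^ 2) := by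
  set N := p ^ 2 + q ^ 2 + r ^ 2 with hN
  set E := x * p ^ 2 + y * q ^ 2 + z * r ^ 2 + 2 * (u * p * q + v * p * r + w * q * r) with hE
  have hN0 : 0 ≤ N := by positivity
  have key : 0 ≤ 2 * s * N * (2 / 3 * s * N - E) := by
    have e : (x * N - s * (p ^ 2 - N / 3)) ^ 2 + (y * N - s * (q ^ 2 - N / 3)) ^ 2
        + (z * N - s * (r ^ 2 - N / 3)) ^ 2 + 2 * ((u * N - s * (p * q)) ^ 2
        + (v * N - s * (p * r)) ^ 2 + (w * N - s * (q * r)) ^ 2)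
        = N ^ 2 * (x ^ 2 + y ^ 2 + z ^ 2 + 2 * (u ^ 2 + v ^ 2 + w ^ 2)) - 2 * s * N * E
          + 2 / 3 * s * N ^ 2 * (x + y + z) + 2 / 3 * s ^ 2 * N ^ 2 := by
      rw [hE, hN]; ring
    rw [h2, hz] at e
    have : 0 ≤ (x * N - s * (p ^ 2 - N / 3)) ^ 2 + (y * N - s * (q ^ 2 - N / 3)) ^ 2
        + (z * N - s * (r ^ 2 - N / 3)) ^ 2 + 2 * ((u * N - s * (p * q)) ^ 2
        + (v * N - s * (p * r)) ^ 2 + (w * N - s * (q * r)) ^ 2) := by positivity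
    rw [e] at this
    linarith
  rcases hN0.eq_or_lt with hN' | hN'
  · have hp : p = 0 := pow_eq_zero_iff two_ne_zero |>.1 (by linarith [sq_nonneg p, sq_nonneg q, sq_nonneg r])
    have hq : q = 0 := pow_eq_zero_iff two_ne_zero |>.1 (by linarith [sq_nonneg p, sq_nonneg q, sq_nonneg r])
    have hr : r = 0 := pow_eq_zero_iff two_ne_zero |>.1 (by linarith [sq_nonneg p, sq_nonneg q, sq_nonneg r])
    rw [← hN', hE, hp, hq, hr]; simp
  rcases hs.eq_or_lt with hs' | hs'
  · subst hs'
    have hx : x = 0 := pow_eq_zero_iff two_ne_zero |>.1 (by linarith [sq_nonneg x, sq_nonneg y, sq_nonneg z, sq_nonneg u, sq_nonneg v, sq_nonneg w])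
    have hy : y = 0 := pow_eq_zero_iff two_ne_zero |>.1 (by linarith [sq_nonneg x, sq_nonneg y, sq_nonneg z, sq_nonneg u, sq_nonneg v, sq_nonneg w])
    have hz : z = 0 := pow_eq_zero_iff two_ne_zero |>.1 (by linarith [sq_nonneg x, sq_nonneg y, sq_nonneg z, sq_nonneg u, sq_nonneg v, sq_nonneg w])
    have hu : u = 0 := pow_eq_zero_iff two_ne_zero |>.1 (by linarith [sq_nonneg x, sq_nonneg y, sq_nonneg z, sq_nonneg u, sq_nonneg v, sq_nonneg w])
    have hv : v = 0 := pow_eq_zero_iff two_ne_zero |>.1 (by linarith [sq_nonneg x, sq_nonneg y, sq_nonneg z, sq_nonneg u, sq_nonneg v, sq_nonneg w])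
    have hw : w = 0 := pow_eq_zero_iff two_ne_zero |>.1 (by linarith [sq_nonneg x, sq_nonneg y, sq_nonneg z, sq_nonneg u, sq_nonneg v, sq_nonneg w])
    rw [hE, hx, hy, hz, hu, hv, hw]; simp
  · have := nonneg_of_mul_nonneg_right key (by positivity)
    linarith

lemma cubic_bound (x y z u v w s : ℝ) (hz : x + y + z = 0) (hs : 0 ≤ s)
    (h2 : x ^ 2 + y ^ 2 + z ^ 2 + 2 * (u ^ 2 + v ^ 2 + w ^ 2) = 2 * s ^ 2 / 3) :
    x ^ 3 + y ^ 3 + z ^ 3 + 3 * x * (u ^ 2 + v ^ 2) + 3 * y * (u ^ 2 + w ^ 2)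
      + 3 * z * (v ^ 2 + w ^ 2) + 6 * u * v * w ≤ 2 * s ^ 3 / 9 := by
  have h1 := quad_bound x y z u v w s (x + s / 3) u v hz hs h2
  have h3 := quad_bound x y z u v w s u (y + s / 3) w hz hs h2
  have h4 := quad_bound x y z u v w s v w (z + s / 3) hz hs h2
  have hz' : z = - x - y := by linarith
  subst hz'
  nlinarith

set_option maxHeartbeats 2000000 in
lemma mat_bound (a b c C : ℝ) (hb : 0 < b) (Q : Mat3) (hQ : Q ∈ Sym0) :
    ∃ s : ℝ, 0 ≤ s ∧ FF a b c C s ≤ fLdG a b c C Q ∧ Q 2 2 ≤ 2 / 3 * s ∧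
      (Q 2 2 = 2 / 3 * s → Q = uniax s e3) := by
  obtain ⟨hsym, htr⟩ := hQ
  have e10 : Q 1 0 = Q 0 1 := hsym.apply 0 1
  have e20 : Q 2 0 = Q 0 2 := hsym.apply 0 2
  have e21 : Q 2 1 = Q 1 2 := hsym.apply 1 2
  have htr' : Q 0 0 + Q 1 1 + Q 2 2 = 0 := by
    simpa [Matrix.trace, Fin.sum_univ_three] using htr
  have t2 : (Q * Q).trace = Q 0 0 ^ 2 + Q 1 1 ^ 2 + Q 2 2 ^ 2
      + 2 * (Q 0 1 ^ 2 + Q 0 2 ^ 2 + Q 1 2 ^ 2) := by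
    simp only [Matrix.trace, Matrix.diag, Matrix.mul_apply, Fin.sum_univ_three, e10, e20, e21]; ring
  have t3 : (Q * Q * Q).trace = Q 0 0 ^ 3 + Q 1 1 ^ 3 + Q 2 2 ^ 3
      + 3 * Q 0 0 * (Q 0 1 ^ 2 + Q 0 2 ^ 2) + 3 * Q 1 1 * (Q 0 1 ^ 2 + Q 1 2 ^ 2)
      + 3 * Q 2 2 * (Q 0 2 ^ 2 + Q 1 2 ^ 2) + 6 * Q 0 1 * Q 0 2 * Q 1 2 := by
    simp only [Matrix.trace, Matrix.diag, Matrix.mul_apply, Fin.sum_univ_three, e10, e20, e21]; ring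
  have hnn : 0 ≤ 3 / 2 * (Q * Q).trace := by rw [t2]; positivity
  set s := Real.sqrt (3 / 2 * (Q * Q).trace)
  have hs : s ^ 2 = 3 / 2 * (Q * Q).trace := Real.sq_sqrt hnn
  have hs0 : 0 ≤ s := Real.sqrt_nonneg _
  have h2 : Q 0 0 ^ 2 + Q 1 1 ^ 2 + Q 2 2 ^ 2
      + 2 * (Q 0 1 ^ 2 + Q 0 2 ^ 2 + Q 1 2 ^ 2) = 2 * s ^ 2 / 3 := by rw [hs, t2]; ring
  have hcub := cubic_bound _ _ _ _ _ _ s htr' hs0 h2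
  have hq := quad_bound _ _ _ _ _ _ s 0 0 1 htr' hs0 h2
  refine ⟨s, hs0, ?_, by linarith, ?_⟩
  · rw [← t3] at hcub
    have : (Q * Q).trace = 2 * s ^ 2 / 3 := by linarith
    unfold FF fLdG
    rw [this]
    nlinarith
  · intro h
    have hsum : (Q 0 0 + s / 3) ^ 2 + (Q 1 1 + s / 3) ^ 2
        + 2 * (Q 0 1 ^ 2 + Q 0 2 ^ 2 + Q 1 2 ^ 2) = 0 := by
      rw [h] at htr' h2
      have : Q 0 0 = - Q 1 1 - 2 / 3 * s := by linarith
      rw [this] at h2 ⊢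
      nlinarith
    have n1 := sq_nonneg (Q 0 0 + s / 3)
    have n2 := sq_nonneg (Q 1 1 + s / 3)
    have n3 := sq_nonneg (Q 0 1)
    have n4 := sq_nonneg (Q 0 2)
    have n5 := sq_nonneg (Q 1 2)
    have z1 : Q 0 0 + s / 3 = 0 := pow_eq_zero_iff two_ne_zero |>.1 (by linarith)
    have z2 : Q 1 1 + s / 3 = 0 := pow_eq_zero_iff two_ne_zero |>.1 (by linarith)
    have z3 : Q 0 1 = 0 := pow_eq_zero_iff two_ne_zero |>.1 (by linarith)
    have z4 : Q 0 2 = 0 := pow_eq_zero_iff two_ne_zero |>.1 (by linarith)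
    have z5 : Q 1 2 = 0 := pow_eq_zero_iff two_ne_zero |>.1 (by linarith)
    clear hsum hcub hq h2 hs t2 t3 n1 n2 n3 n4 n5
    ext i j
    fin_cases i <;> fin_cases j <;>
      simp [uniax, e3, Matrix.vecMulVec_apply, e10, e20, e21, z3, z4, z5] <;> linarith

lemma uniax_mem (s : ℝ) : uniax s e3 ∈ Sym0 := by
  constructor
  · ext i j
    fin_cases i <;> fin_cases j <;> simp [uniax, e3, Matrix.vecMulVec_apply]
  · simp [uniax, e3, Matrix.vecMulVec_apply, Matrix.trace, Fin.sum_univ_three]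
    ring

lemma f_uniax (a b c C s : ℝ) : fLdG a b c C (uniax s e3) = FF a b c C s := by
  unfold fLdG FF
  simp [uniax, e3, Matrix.vecMulVec_apply, Matrix.trace, Fin.sum_univ_three, Matrix.mul_apply]
  ring

lemma g_uniax (σ s : ℝ) : gMag σ (uniax s e3) = 2 / 3 * (σ - s) := by
  simp [gMag, uniax, e3, Matrix.vecMulVec_apply]
  ring

theorem statement6 (a b c C : ℝ) (ha : 0 < a) (hb : 0 < b) (hc : 0 < c)
    (hC : IsLeast (fLdG a b c C '' Sym0) 0) :
    ∃ t₀ > (0 : ℝ), ∃ Cc > (0 : ℝ), ∀ t : ℝ, 0 < t → t ≤ t₀ →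
      ∃ s' : ℝ, |s' - sStar a b c| ≤ Cc * t ∧
        (∀ Q ∈ Sym0,
          fLdG a b c C (uniax s' e3) + t * gMag (sStar a b c) (uniax s' e3) ≤
            fLdG a b c C Q + t * gMag (sStar a b c) Q) ∧
        (∀ Q ∈ Sym0,
          fLdG a b c C Q + t * gMag (sStar a b c) Q =
            fLdG a b c C (uniax s' e3) + t * gMag (sStar a b c) (uniax s' e3) →
          Q = uniax s' e3) ∧
        -Cc * t ^ 2 ≤
          fLdG a b c C (uniax s' e3) + t * gMag (sStar a b c) (uniax s' e3) ∧
        fLdG a b c C (uniax s' e3) + t * gMag (sStar a b c) (uniax s' e3) ≤ 0 := by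
  obtain ⟨hσ, hq, hbc⟩ := sStar_eq a b c ha hb hc
  set σ := sStar a b c
  have h0 : FF a b c C σ = 0 := by
    apply le_antisymm
    · obtain ⟨Q, hQ, hf⟩ := hC.1
      obtain ⟨s, hs, hF, -, -⟩ := mat_bound a b c C hb Q hQ
      rw [hf, FF_id a b c C σ s hq] at hF
      have hP : 0 < 2 * c * σ - 2 * b / 3 := by linarith
      have : 0 ≤ (s - σ) ^ 2 / 9 * (c * s ^ 2 + (2 * c * σ - 2 * b / 3) * s
          + (2 * c * σ - 2 * b / 3) * σ / 2) := by positivity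
      linarith
    · rw [← f_uniax]
      exact hC.2 ⟨_, uniax_mem σ, rfl⟩
  obtain ⟨K, hK, hmain⟩ := scalar a b c C σ ha hb hc hσ hq hbc h0
  refine ⟨1, one_pos, K, hK, fun t ht _ => ?_⟩
  obtain ⟨s', hs', hd, hmin, hlo, hhi⟩ := hmain t ht
  have hv : fLdG a b c C (uniax s' e3) + t * gMag σ (uniax s' e3)
      = FF a b c C s' + 2 / 3 * t * (σ - s') := by
    rw [f_uniax, g_uniax]; ring
  refine ⟨s', hd, ?_⟩
  rw [hv]
  refine ⟨?_, ?_, hlo, hhi⟩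
  · intro Q hQ
    obtain ⟨s, hs, hF, h33, -⟩ := mat_bound a b c C hb Q hQ
    have h1 : FF a b c C s' + 2 / 3 * t * (σ - s') ≤ FF a b c C s + 2 / 3 * t * (σ - s) := by
      by_cases h : s = s'
      · rw [h]
      · exact (hmin s hs h).le
    have h2 := mul_le_mul_of_nonneg_left h33 ht.le
    unfold gMag
    linarith
  · intro Q hQ heq
    obtain ⟨s, hs, hF, h33, hun⟩ := mat_bound a b c C hb Q hQ
    have h2 := mul_le_mul_of_nonneg_left h33 ht.le
    unfold gMag at heq
    by_cases h : s = s'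
    · subst h
      apply hun
      apply le_antisymm h33
      refine le_of_mul_le_mul_left ?_ ht
      linarith
    · have := hmin s hs h
      linarith
end
end

section
/- There exist R ≥ √(2/3)·s* and t₀ > 0 such that for every t ∈ [0, t₀] and every Q ∈ Sym₀, f(Π_R Q) + t·g(Π_R Q) ≤ f(Q) + t·g(Q), where Π_R denotes the nearest-point projection of Sym₀ onto the closed ball { P ∈ Sym₀ : |P| ≤ R }. -/
/- STATEMENT 7: There exist R ≥ √(2/3)·s* and t₀ > 0 such that for every t ∈ [0, t₀]
and every Q ∈ Sym₀, f(Π_R Q) + t·g(Π_R Q) ≤ f(Q) + t·g(Q), where Π_R is the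
nearest-point projection onto the closed Frobenius ball of radius R. -/

noncomputable section

open Matrix

/-- Nearest-point projection (in Frobenius norm) onto the closed ball of radius R. -/
def PiR (R : ℝ) (Q : Mat3) : Mat3 := if frob Q ≤ R then Q else (R / frob Q) • Q

theorem abs_entry_le (Q : Mat3) (i j : Fin 3) : |Q i j| ≤ frob Q := by
  unfold frob
  apply Real.abs_le_sqrt
  have h1 : (Q i j) ^ 2 ≤ ∑ j, (Q i j) ^ 2 :=
    Finset.single_le_sum (f := fun j => (Q i j) ^ 2) (fun _ _ => sq_nonneg _) (Finset.mem_univ j)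
  have h2 : ∑ j, (Q i j) ^ 2 ≤ ∑ i, ∑ j, (Q i j) ^ 2 :=
    Finset.single_le_sum (f := fun i => ∑ j, (Q i j) ^ 2)
      (fun _ _ => Finset.sum_nonneg fun _ _ => sq_nonneg _) (Finset.mem_univ i)
  exact h1.trans h2

theorem trace_sq_eq (Q : Mat3) (h : Q.IsSymm) : (Q * Q).trace = frob Q ^ 2 := by
  have e : frob Q ^ 2 = ∑ i, ∑ j, (Q i j) ^ 2 :=
    Real.sq_sqrt (Finset.sum_nonneg fun _ _ => Finset.sum_nonneg fun _ _ => sq_nonneg _)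
  rw [e]
  simp only [Matrix.trace, Matrix.diag, Matrix.mul_apply]
  refine Finset.sum_congr rfl fun i _ => Finset.sum_congr rfl fun j _ => ?_
  rw [h.apply i j, sq]

theorem trace_cube_le (Q : Mat3) : (Q * Q * Q).trace ≤ 27 * frob Q ^ 3 := by
  have hn : 0 ≤ frob Q := Real.sqrt_nonneg _
  have key : ∀ i j k : Fin 3, Q i k * Q k j * Q j i ≤ frob Q ^ 3 := by
    intro i j k
    refine (le_abs_self _).trans ?_
    rw [abs_mul, abs_mul, show frob Q ^ 3 = frob Q * frob Q * frob Q by ring]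
    gcongr <;> apply abs_entry_le
  simp only [Matrix.trace, Matrix.diag, Matrix.mul_apply, Finset.sum_mul]
  calc _ ≤ ∑ i : Fin 3, ∑ j : Fin 3, ∑ k : Fin 3, frob Q ^ 3 :=
        Finset.sum_le_sum fun i _ => Finset.sum_le_sum fun j _ => Finset.sum_le_sum fun k _ =>
          key i j k
    _ = _ := by simp; ring

theorem scalar_ineq (a b c R n t : ℝ) (ha : 0 < a) (hb : 0 < b) (hc : 0 < c) (hR : 1 ≤ R)
    (hcR : a + 27 * b + 1 ≤ c * R / 2) (hn : R < n) (ht1 : t ≤ 1) :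
    0 ≤ c / 4 * (n ^ 4 - R ^ 4) - 9 * b * (n ^ 3 - R ^ 3) - a / 2 * (n ^ 2 - R ^ 2)
      - t * (n - R) := by
  have e : c / 4 * (n ^ 4 - R ^ 4) - 9 * b * (n ^ 3 - R ^ 3) - a / 2 * (n ^ 2 - R ^ 2)
      - t * (n - R) = (n - R) * (c / 4 * (n + R) * (n ^ 2 + R ^ 2)
        - 9 * b * (n ^ 2 + n * R + R ^ 2) - a / 2 * (n + R) - t) := by ring
  rw [e]
  refine mul_nonneg (by linarith) ?_
  have hS : 0 ≤ n ^ 2 + R ^ 2 := by positivity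
  have h1 : (a + 27 * b + 1) * (n ^ 2 + R ^ 2) ≤ c / 4 * (n + R) * (n ^ 2 + R ^ 2) := by
    refine mul_le_mul_of_nonneg_right (hcR.trans ?_) hS
    nlinarith
  have h2 : b * (n ^ 2 + n * R + R ^ 2) ≤ b * (3 * (n ^ 2 + R ^ 2)) := by
    refine mul_le_mul_of_nonneg_left ?_ hb.le
    nlinarith [sq_nonneg (n - R), sq_nonneg n, sq_nonneg R]
  have h3 : a * (n + R) ≤ a * (n ^ 2 + R ^ 2) := by
    refine mul_le_mul_of_nonneg_left ?_ ha.le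
    nlinarith
  have h4 : 1 ≤ n ^ 2 + R ^ 2 := by nlinarith
  have h5 : 0 ≤ a * (n ^ 2 + R ^ 2) := by positivity
  linarith

theorem statement7 (a b c C : ℝ) (ha : 0 < a) (hb : 0 < b) (hc : 0 < c)
    (hC : IsLeast (fLdG a b c C '' Sym0) 0) :
    ∃ R : ℝ, Real.sqrt (2 / 3) * sStar a b c ≤ R ∧
      ∃ t₀ > (0 : ℝ), ∀ t : ℝ, 0 ≤ t → t ≤ t₀ → ∀ Q ∈ Sym0,
        fLdG a b c C (PiR R Q) + t * gMag (sStar a b c) (PiR R Q) ≤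
          fLdG a b c C Q + t * gMag (sStar a b c) Q := by
  set s := sStar a b c with hs
  have hs0 : 0 ≤ s := by rw [hs]; unfold sStar; positivity
  set R : ℝ := Real.sqrt (2 / 3) * s + 1 + 2 * (a + 27 * b + 1) / c with hRdef
  have hA : 0 ≤ Real.sqrt (2 / 3) * s := by positivity
  have hB : 0 ≤ 2 * (a + 27 * b + 1) / c := by positivity
  refine ⟨R, by linarith, 1, one_pos, ?_⟩
  intro t ht0 ht1 Q hQ
  have hR1 : 1 ≤ R := by linarith
  have hcR : a + 27 * b + 1 ≤ c * R / 2 := by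
    have : 2 * (a + 27 * b + 1) / c ≤ R := by linarith
    rw [div_le_iff₀ hc] at this
    linarith
  unfold PiR
  split_ifs with h
  · exact le_rfl
  push Not at h
  have h2 := trace_sq_eq Q hQ.1
  have h3 := trace_cube_le Q
  have h4 := (le_abs_self _).trans (abs_entry_le Q 2 2)
  set n := frob Q with hn
  have hn0 : 0 < n := by linarith
  set l := R / n with hl
  have hln : l * n = R := by rw [hl]; field_simp
  have hl0 : 0 ≤ l := by positivity
  have hl1 : l ≤ 1 := by rw [hl, div_le_one hn0]; exact h.le
  have key := scalar_ineq a b c R n t ha hb hc hR1 hcR h ht1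
  unfold fLdG gMag
  simp only [Matrix.smul_mul, Matrix.mul_smul, Matrix.trace_smul, smul_eq_mul, Matrix.smul_apply, h2]
  set T := (Q * Q * Q).trace
  have k1 : b / 3 * ((1 - l ^ 3) * T) ≤ b / 3 * ((1 - l ^ 3) * (27 * n ^ 3)) := by
    have : 0 ≤ 1 - l ^ 3 := by linarith [pow_le_one₀ hl0 hl1 (n := 3)]
    gcongr
  have k2 : t * ((1 - l) * Q 2 2) ≤ t * ((1 - l) * n) := by
    have : 0 ≤ 1 - l := by linarith
    gcongr
  rw [← hln] at key
  linarith
end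
end

section
/- There exist α₀, α₁ > 0 such that the following holds. Let Q ∈ Sym₀ with dist(Q, 𝒩) ≤ α₀, let α ∈ (0, α₁), and suppose n : B_α(Q) → ℝ³ is a continuous map such that for every P ∈ B_α(Q), n(P) is a unit eigenvector of P associated to its largest eigenvalue (for α₀, α₁ small every such P has a simple largest eigenvalue, so such a continuous selection exists on the ball). Then lim_{s→0} H⁴( { Y ∈ B_α(0) ⊂ Sym₀ : n(Q − Y)·e₃ = s } ) = H⁴( B_α(Q) ∩ 𝒯 ), where H⁴ denotes the 4-dimensional Hausdorff measure on the 5-dimensional Euclidean space Sym₀. -/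
/- STATEMENT 10: There exist α₀, α₁ > 0 such that: for Q ∈ Sym₀ with dist(Q,𝒩) ≤ α₀ and
α ∈ (0,α₁), if n : B_α(Q) → ℝ³ is continuous and n(P) is a unit eigenvector of P for
its largest eigenvalue for every P ∈ B_α(Q), then
lim_{s→0} H⁴({Y ∈ B_α(0) ⊂ Sym₀ : n(Q−Y)·e₃ = s}) = H⁴(B_α(Q) ∩ 𝒯). -/

noncomputable section

open Matrix MeasureTheory Metric Set Filter

abbrev E9 : Type := EuclideanSpace ℝ (Fin 3 × Fin 3)

def toM (A : E9) : Mat3 := Matrix.of fun i j => A (i, j)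

def Sym0E : Set E9 := {A | (toM A).IsSymm ∧ (toM A).trace = 0}

def NsetE (s : ℝ) : Set E9 := {A | ∃ n, unitVec n ∧ toM A = uniax s n}

/-- 𝒯 = { Q ∈ Sym₀ : Q ≠ 0, simple largest eigenvalue, unit eigenvector n with n·e₃ = 0 }. -/
def TsetE : Set E9 :=
  {A | A ∈ Sym0E ∧ A ≠ 0 ∧ ∃ (lam : ℝ) (n : Fin 3 → ℝ), SimpleMaxEigen (toM A) lam n ∧ n 2 = 0}

lemma var_principle (P : Mat3) (hP : P.IsSymm) (lam : ℝ) (n : Fin 3 → ℝ) (h : MaxEigen P lam n)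
    (v : Fin 3 → ℝ) : v ⬝ᵥ (P *ᵥ v) ≤ lam * (v ⬝ᵥ v) := by
  have hM : (lam • (1 : Mat3) - P).IsHermitian := by
    unfold Matrix.IsHermitian
    rw [Matrix.conjTranspose_eq_transpose_of_trivial, Matrix.transpose_sub, hP.eq,
      Matrix.transpose_smul, Matrix.transpose_one]
  have hpos : (lam • (1 : Mat3) - P).PosSemidef := by
    rw [hM.posSemidef_iff_eigenvalues_nonneg]
    intro j
    have e := hM.mulVec_eigenvectorBasis j
    set w : Fin 3 → ℝ := ⇑(hM.eigenvectorBasis j) with hw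
    have hw0 : w ≠ 0 := by
      intro h0
      apply hM.eigenvectorBasis.toBasis.ne_zero j
      ext i
      simpa using congrFun h0 i
    have := h.2.2 (lam - hM.eigenvalues j) w hw0 (by
      unfold IsEigen
      rw [Matrix.sub_mulVec, Matrix.smul_mulVec, Matrix.one_mulVec] at e
      rw [sub_smul, ← e]; abel)
    simp only [Pi.zero_apply]
    linarith
  have := hpos.dotProduct_mulVec_nonneg v
  rw [Matrix.sub_mulVec, Matrix.smul_mulVec, Matrix.one_mulVec] at this
  simp only [star_trivial, dotProduct_sub, dotProduct_smul, smul_eq_mul] at this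
  linarith

lemma bil_bound (A : E9) (u v : Fin 3 → ℝ) :
    (u ⬝ᵥ (toM A *ᵥ v)) ^ 2 ≤ ‖A‖ ^ 2 * ((u ⬝ᵥ u) * (v ⬝ᵥ v)) := by
  have h1 : u ⬝ᵥ (toM A *ᵥ v) = ∑ p : Fin 3 × Fin 3, A p * (u p.1 * v p.2) := by
    rw [Fintype.sum_prod_type]
    simp only [dotProduct, mulVec, toM, Matrix.of_apply, Finset.mul_sum]
    refine Finset.sum_congr rfl fun i _ => Finset.sum_congr rfl fun j _ => by ring
  have h2 : (u ⬝ᵥ u) * (v ⬝ᵥ v) = ∑ p : Fin 3 × Fin 3, (u p.1 * v p.2) ^ 2 := by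
    rw [Fintype.sum_prod_type]
    simp only [dotProduct, Finset.sum_mul_sum]
    refine Finset.sum_congr rfl fun i _ => Finset.sum_congr rfl fun j _ => by ring
  have h3 : ‖A‖ ^ 2 = ∑ p : Fin 3 × Fin 3, (A p) ^ 2 := by
    rw [EuclideanSpace.norm_sq_eq]; simp
  rw [h1, h2, h3]
  exact Finset.sum_mul_sq_le_sq_mul_sq _ _ _

lemma unit_dot {n : Fin 3 → ℝ} (h : unitVec n) : n ⬝ᵥ n = 1 := by
  rw [← h]; simp [dotProduct, sq]

lemma toM_sub (A B : E9) : toM (A - B) = toM A - toM B := by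
  ext i j; simp [toM]

/-- the data near the uniaxial manifold -/
def Near (sS : ℝ) (P : E9) (lam : ℝ) (n : Fin 3 → ℝ) : Prop :=
  MaxEigen (toM P) lam n ∧ sS / 2 ≤ lam ∧ (∀ v : Fin 3 → ℝ, v ⬝ᵥ (toM P *ᵥ v) ≤ lam * (v ⬝ᵥ v)) ∧
    ∀ v : Fin 3 → ℝ, n ⬝ᵥ v = 0 → v ⬝ᵥ (toM P *ᵥ v) ≤ (lam - sS / 2) * (v ⬝ᵥ v)

lemma uniax_quad (s : ℝ) (m v : Fin 3 → ℝ) :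
    v ⬝ᵥ (uniax s m *ᵥ v) = s * ((m ⬝ᵥ v) ^ 2 - (v ⬝ᵥ v) / 3) := by
  simp only [uniax, Matrix.smul_mulVec, Matrix.sub_mulVec, Matrix.one_mulVec, dotProduct_smul,
    dotProduct_sub, Matrix.vecMulVec_mulVec, smul_eq_mul]
  simp [dotProduct, Fin.sum_univ_three, -mul_eq_mul_left_iff]
  ring

lemma near_of (sS : ℝ) (hs : 0 < sS) (P N0 : E9) (m : Fin 3 → ℝ) (hm : unitVec m)
    (hN : toM N0 = uniax sS m) (hP : P ∈ Sym0E) (hd : ‖P - N0‖ ≤ 3 * sS / 100)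
    (lam : ℝ) (n : Fin 3 → ℝ) (h : MaxEigen (toM P) lam n) : Near sS P lam n := by
  have var := var_principle _ hP.1 _ _ h
  have hq : ∀ v : Fin 3 → ℝ, v ⬝ᵥ (toM P *ᵥ v) =
      sS * ((m ⬝ᵥ v) ^ 2 - (v ⬝ᵥ v) / 3) + v ⬝ᵥ (toM (P - N0) *ᵥ v) := by
    intro v
    rw [toM_sub, Matrix.sub_mulVec, dotProduct_sub, hN, uniax_quad]; ring
  have hvv : ∀ v : Fin 3 → ℝ, 0 ≤ v ⬝ᵥ v := fun v => by
    simp only [dotProduct, ← sq]; positivity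
  have hE : ∀ v : Fin 3 → ℝ, |v ⬝ᵥ (toM (P - N0) *ᵥ v)| ≤ 3 * sS / 100 * (v ⬝ᵥ v) := by
    intro v
    apply abs_le_of_sq_le_sq _ (by have := hvv v; positivity)
    refine (bil_bound _ v v).trans ?_
    have := hvv v
    rw [mul_pow, ← sq]
    gcongr
  have hn1 := unit_dot h.1
  have hm1 := unit_dot hm
  have hlam : lam = n ⬝ᵥ (toM P *ᵥ n) := by
    rw [h.2.1, dotProduct_smul, hn1]; simp
  have h1 := var m
  rw [hq m, hm1] at h1
  have h2 := abs_le.1 (hE m)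
  rw [hm1] at h2
  have h3 := abs_le.1 (hE n)
  rw [hn1] at h3
  have hlam2 := hlam
  rw [hq n, hn1] at hlam2
  refine ⟨h, by linarith, var, ?_⟩
  intro v hv
  have h4 := abs_le.1 (hE v)
  -- Bessel
  have hB : (m ⬝ᵥ v) ^ 2 ≤ (1 - (m ⬝ᵥ n) ^ 2) * (v ⬝ᵥ v) := by
    have c := Finset.sum_mul_sq_le_sq_mul_sq Finset.univ (fun i => m i - (m ⬝ᵥ n) * n i) v
    have e1 : ∑ i, (m i - (m ⬝ᵥ n) * n i) * v i = m ⬝ᵥ v := by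
      have : ∑ i, (m i - (m ⬝ᵥ n) * n i) * v i = m ⬝ᵥ v - (m ⬝ᵥ n) * (n ⬝ᵥ v) := by
        simp only [sub_mul, Finset.sum_sub_distrib, dotProduct, Finset.mul_sum, mul_assoc]
      rw [this, hv]; ring
    have e2 : ∑ i, (m i - (m ⬝ᵥ n) * n i) ^ 2 = 1 - (m ⬝ᵥ n) ^ 2 := by
      have : ∑ i, (m i - (m ⬝ᵥ n) * n i) ^ 2 =
          m ⬝ᵥ m - 2 * (m ⬝ᵥ n) * (m ⬝ᵥ n) + (m ⬝ᵥ n) ^ 2 * (n ⬝ᵥ n) := by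
        simp only [dotProduct, Fin.sum_univ_three]; ring
      rw [this, hm1, hn1]; ring
    have e3 : ∑ i, v i ^ 2 = v ⬝ᵥ v := by simp [dotProduct, sq]
    rwa [e1, e2, e3] at c
  rw [hq v]
  have h5 : sS * (1 - (m ⬝ᵥ n) ^ 2) ≤ 6 * sS / 100 := by nlinarith
  have h6 := mul_le_mul_of_nonneg_right h5 (hvv v)
  have h7 := mul_le_mul_of_nonneg_left hB hs.le
  have h8 : 0 ≤ (lam - (2/3 * sS - 3 * sS / 100)) * (v ⬝ᵥ v) := mul_nonneg (by linarith) (hvv v)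
  have h9 : 0 ≤ sS * (v ⬝ᵥ v) := mul_nonneg hs.le (hvv v)
  nlinarith

lemma near_simple {sS : ℝ} (hs : 0 < sS) {P : E9} {lam : ℝ} {n : Fin 3 → ℝ} (h : Near sS P lam n) :
    SimpleMaxEigen (toM P) lam n := by
  refine ⟨h.1, fun v hv => ⟨n ⬝ᵥ v, ?_⟩⟩
  have hn1 := unit_dot h.1.1
  set w := v - (n ⬝ᵥ v) • n with hw
  have hw1 : n ⬝ᵥ w = 0 := by
    rw [hw, dotProduct_sub, dotProduct_smul, hn1]; simp
  have hw2 : toM P *ᵥ w = lam • w := by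
    rw [hw, Matrix.mulVec_sub, Matrix.mulVec_smul, hv, h.1.2.1]
    ext i; simp; ring
  have := h.2.2.2 w hw1
  rw [hw2, dotProduct_smul, smul_eq_mul] at this
  have h0 : w ⬝ᵥ w = 0 := by
    have : 0 ≤ w ⬝ᵥ w := by simp only [dotProduct, ← sq]; positivity
    nlinarith
  have : w = 0 := dotProduct_self_eq_zero.1 h0
  rw [hw, sub_eq_zero] at this
  exact this

lemma near_lip {sS : ℝ} (hs : 0 < sS) {P P' : E9} {lam lam' : ℝ} {n n' : Fin 3 → ℝ}
    (h : Near sS P lam n) (h' : Near sS P' lam' n') :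
    sS ^ 2 * (1 - (n ⬝ᵥ n') ^ 2) ≤ 16 * ‖P - P'‖ ^ 2 := by
  have hn1 := unit_dot h.1.1
  have hn1' := unit_dot h'.1.1
  set a := n ⬝ᵥ n' with ha
  set w := n' - a • n with hw
  set D := ‖P - P'‖ with hD
  have hD0 : 0 ≤ D := norm_nonneg _
  have hw1 : n ⬝ᵥ w = 0 := by
    rw [hw, dotProduct_sub, dotProduct_smul, hn1, ← ha]; simp
  have hw2 : w ⬝ᵥ n' = w ⬝ᵥ w := by
    have : n' = w + a • n := by rw [hw]; abel
    conv_lhs => rw [this]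
    rw [dotProduct_add, dotProduct_smul, dotProduct_comm w n, hw1]; simp
  have hww : w ⬝ᵥ w = 1 - a ^ 2 := by
    rw [← hw2, hw, sub_dotProduct, smul_dotProduct, hn1', ← ha]; simp; ring
  have hl : lam - lam' ≤ D := by
    have e : n ⬝ᵥ (toM P *ᵥ n) = lam := by rw [h.1.2.1, dotProduct_smul, hn1]; simp
    have e2 : n ⬝ᵥ (toM (P - P') *ᵥ n) = lam - n ⬝ᵥ (toM P' *ᵥ n) := by
      rw [toM_sub, Matrix.sub_mulVec, dotProduct_sub, e]
    have b := bil_bound (P - P') n n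
    rw [hn1, mul_one, mul_one] at b
    have b2 := abs_le.1 (abs_le_of_sq_le_sq b hD0)
    have := h'.2.2.1 n
    rw [hn1] at this
    linarith
  have key : w ⬝ᵥ (toM P *ᵥ w) = lam * (w ⬝ᵥ w) + w ⬝ᵥ (toM (P - P') *ᵥ n') +
      (lam' - lam) * (w ⬝ᵥ w) := by
    have e : toM P *ᵥ w = toM (P - P') *ᵥ n' + lam' • n' - (a * lam) • n := by
      rw [toM_sub, Matrix.sub_mulVec, h'.1.2.1, hw, Matrix.mulVec_sub, Matrix.mulVec_smul, h.1.2.1]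
      rw [smul_smul]; abel
    rw [e, dotProduct_sub, dotProduct_add, dotProduct_smul, dotProduct_smul, hw2,
      dotProduct_comm w n, hw1]
    simp; ring
  have g := h.2.2.2 w hw1
  have b := bil_bound (P - P') w n'
  rw [hn1', mul_one, ← hD] at b
  set x := w ⬝ᵥ w with hx
  have hx0 : 0 ≤ x := by rw [hx]; simp only [dotProduct, ← sq]; positivity
  have hx1 : x ≤ 1 := by rw [hww]; nlinarith [sq_nonneg a]
  rw [← hww]
  set y := w ⬝ᵥ (toM (P - P') *ᵥ n')
  -- sS/2 x ≤ |y| + D x, y² ≤ D² x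
  set r := Real.sqrt x
  have hr : r ^ 2 = x := Real.sq_sqrt hx0
  have hr0 : 0 ≤ r := Real.sqrt_nonneg _
  have hr1 : r ≤ 1 := Real.sqrt_le_one.mpr hx1
  have hy : |y| ≤ D * r := abs_le_of_sq_le_sq (by rw [mul_pow, hr]; exact b) (by positivity)
  have hy2 := (abs_le.1 hy).1
  have h1 : sS / 2 * x ≤ D * r + D * x := by nlinarith
  have h2 : sS / 2 * x ≤ 2 * D * r := by
    have : D * x ≤ D * r := by rw [← hr]; nlinarith [mul_nonneg hD0 hr0]
    linarith
  have h3 : sS * r ≤ 4 * D := by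
    rcases hr0.eq_or_lt with h0 | h0
    · rw [← h0]; simp; exact hD0
    · rw [← hr] at h2
      have : (sS * r) * r ≤ (4 * D) * r := by nlinarith
      exact le_of_mul_le_mul_right this h0
  rw [← hr]
  have h4 : 0 ≤ sS * r := by positivity
  nlinarith

def ofM (M : Mat3) : E9 := WithLp.toLp 2 (fun p => M p.1 p.2)

lemma toM_ofM (M : Mat3) : toM (ofM M) = M := by ext i j; simp [toM, ofM]
lemma ofM_toM (A : E9) : ofM (toM A) = A := by ext p; simp [toM, ofM]
lemma ofM_add (A B : Mat3) : ofM (A + B) = ofM A + ofM B := by ext p; simp [ofM]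
lemma ofM_sub (A B : Mat3) : ofM (A - B) = ofM A - ofM B := by ext p; simp [ofM]
lemma ofM_norm_sq (A : Mat3) : ‖ofM A‖ ^ 2 = ∑ i, ∑ j, (A i j) ^ 2 := by
  rw [EuclideanSpace.norm_sq_eq, Fintype.sum_prod_type]; simp [ofM]
lemma ofM_tr (A : Mat3) : ‖ofM Aᵀ‖ = ‖ofM A‖ := by
  have : ‖ofM Aᵀ‖ ^ 2 = ‖ofM A‖ ^ 2 := by
    rw [ofM_norm_sq, ofM_norm_sq, Finset.sum_comm]; rfl
  exact (pow_left_inj₀ (norm_nonneg _) (norm_nonneg _) two_ne_zero).1 this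
lemma ofM_mul (A B : Mat3) : ‖ofM (A * B)‖ ≤ ‖ofM A‖ * ‖ofM B‖ := by
  refine (sq_le_sq₀ (norm_nonneg _) (by positivity)).1 ?_
  rw [mul_pow, ofM_norm_sq, ofM_norm_sq, ofM_norm_sq]
  have e : ∀ i j, ((A * B) i j) ^ 2 ≤ (∑ k, A i k ^ 2) * (∑ k, B k j ^ 2) := fun i j => by
    rw [Matrix.mul_apply]; exact Finset.sum_mul_sq_le_sq_mul_sq _ _ _
  calc _ ≤ ∑ i, ∑ j, (∑ k, A i k ^ 2) * (∑ k, B k j ^ 2) :=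
        Finset.sum_le_sum fun i _ => Finset.sum_le_sum fun j _ => e i j
    _ = _ := by
        rw [← Finset.sum_mul_sum]
        congr 1
        rw [Finset.sum_comm]
lemma ofM_entry (A : Mat3) (b : ℝ) (hb : 0 ≤ b) (h : ∀ i j, |A i j| ≤ b) : ‖ofM A‖ ≤ 3 * b := by
  refine (sq_le_sq₀ (norm_nonneg _) (by positivity)).1 ?_
  rw [ofM_norm_sq]
  calc _ ≤ ∑ i : Fin 3, ∑ j : Fin 3, b ^ 2 :=
        Finset.sum_le_sum fun i _ => Finset.sum_le_sum fun j _ => sq_le_sq' (abs_le.1 (h i j)).1 (abs_le.1 (h i j)).2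
    _ = _ := by simp; ring

def Kmat (s κ x y : ℝ) : Mat3 :=
  !![-κ * x ^ 2, -κ * x * y, -s * x; -κ * x * y, -κ * y ^ 2, -s * y; s * x, s * y, -κ]

lemma K_orth (s κ x y : ℝ) (hxy : x ^ 2 + y ^ 2 = 1) (hk : s ^ 2 = 2 * κ - κ ^ 2) :
    (1 + Kmat s κ x y) * (1 + Kmat s κ x y)ᵀ = 1 := by
  have hy : y ^ 2 = 1 - x ^ 2 := by linarith
  ext i j
  fin_cases i <;> fin_cases j <;>
    simp [Kmat, Matrix.mul_apply, Fin.sum_univ_three, Matrix.one_apply] <;> grind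

lemma K_orth' (s κ x y : ℝ) (hxy : x ^ 2 + y ^ 2 = 1) (hk : s ^ 2 = 2 * κ - κ ^ 2) :
    (1 + Kmat s κ x y)ᵀ * (1 + Kmat s κ x y) = 1 :=
  mul_eq_one_comm.1 (K_orth s κ x y hxy hk)

lemma K_bound (s κ x y : ℝ) (hxy : x ^ 2 + y ^ 2 = 1) (hκ0 : 0 ≤ κ) (hκ : κ ≤ |s|) :
    ‖ofM (Kmat s κ x y)‖ ≤ 3 * |s| := by
  have hx : |x| ≤ 1 := by apply abs_le_of_sq_le_sq _ zero_le_one; nlinarith [sq_nonneg y]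
  have hy : |y| ≤ 1 := by apply abs_le_of_sq_le_sq _ zero_le_one; nlinarith [sq_nonneg x]
  have hk : |κ| ≤ |s| := by rwa [abs_of_nonneg hκ0]
  have h0 := abs_nonneg s
  have hm : ∀ a b c : ℝ, |a| ≤ |s| → |b| ≤ 1 → |c| ≤ 1 → |a| * |b| * |c| ≤ |s| := by
    intro a b c ha hb hc
    calc _ ≤ |s| * 1 * 1 := by gcongr
      _ = _ := by ring
  have hm' : ∀ a b : ℝ, |a| ≤ |s| → |b| ≤ 1 → |a| * |b| ≤ |s| := by
    intro a b ha hb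
    calc _ ≤ |s| * 1 := by gcongr
      _ = _ := by ring
  have e1 := hm κ x x hk hx hx
  have e2 := hm κ x y hk hx hy
  have e3 := hm κ y y hk hy hy
  have e4 := hm' s x le_rfl hx
  have e5 := hm' s y le_rfl hy
  apply ofM_entry _ _ h0
  intro i j
  fin_cases i <;> fin_cases j <;> simp only [Kmat, sq, abs_mul, abs_neg, mul_assoc, Matrix.of_apply, Matrix.cons_val', Matrix.cons_val_zero, Matrix.cons_val_one, Matrix.cons_val, Fin.zero_eta, Fin.mk_one, Fin.reduceFinMk] <;> linarith

lemma K_lip (s κ x y x' y' d : ℝ) (hxy : x ^ 2 + y ^ 2 = 1) (hxy' : x' ^ 2 + y' ^ 2 = 1)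
    (hκ0 : 0 ≤ κ) (hκ : κ ≤ |s|) (hdx : |x - x'| ≤ d) (hdy : |y - y'| ≤ d) :
    ‖ofM (Kmat s κ x y - Kmat s κ x' y')‖ ≤ 6 * |s| * d := by
  have hx : |x| ≤ 1 := by apply abs_le_of_sq_le_sq _ zero_le_one; nlinarith [sq_nonneg y]
  have hy : |y| ≤ 1 := by apply abs_le_of_sq_le_sq _ zero_le_one; nlinarith [sq_nonneg x]
  have hx' : |x'| ≤ 1 := by apply abs_le_of_sq_le_sq _ zero_le_one; nlinarith [sq_nonneg y']
  have hy' : |y'| ≤ 1 := by apply abs_le_of_sq_le_sq _ zero_le_one; nlinarith [sq_nonneg x']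
  have hd : 0 ≤ d := (abs_nonneg _).trans hdx
  have hk : |κ| ≤ |s| := by rwa [abs_of_nonneg hκ0]
  have h0 := abs_nonneg s
  have hm : ∀ u v u' v' : ℝ, |u| ≤ 1 → |v'| ≤ 1 → |u - u'| ≤ d → |v - v'| ≤ d →
      |-κ * u * v - -κ * u' * v'| ≤ 2 * |s| * d := by
    intro u v u' v' hu hv hu' hv'
    have : -κ * u * v - -κ * u' * v' = - κ * (u * (v - v') + v' * (u - u')) := by ring
    rw [this, abs_mul, abs_neg]
    have : |u * (v - v') + v' * (u - u')| ≤ 1 * d + 1 * d := by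
      refine (abs_add_le _ _).trans ?_
      rw [abs_mul, abs_mul]; gcongr
    calc _ ≤ |s| * (1 * d + 1 * d) := by gcongr
      _ = _ := by ring
  have hm' : ∀ a u u' : ℝ, |a| = |s| → |u - u'| ≤ d → |a * u - a * u'| ≤ 2 * |s| * d := by
    intro a u u' ha h
    rw [← mul_sub, abs_mul, ha]
    nlinarith [mul_nonneg h0 hd, mul_le_mul_of_nonneg_left h h0]
  have e1 := hm x x x' x' hx hx' hdx hdx
  have e2 := hm x y x' y' hx hy' hdx hdy
  have e3 := hm y y y' y' hy hy' hdy hdy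
  have e4 := hm' s x x' rfl hdx
  have e5 := hm' s y y' rfl hdy
  have e6 := hm' (-s) x x' (abs_neg s) hdx
  have e7 := hm' (-s) y y' (abs_neg s) hdy
  have e8 : (0:ℝ) ≤ 2 * |s| * d := by positivity
  have : 6 * |s| * d = 3 * (2 * |s| * d) := by ring
  rw [this]
  apply ofM_entry _ _ e8
  intro i j
  fin_cases i <;> fin_cases j <;> simp only [Kmat, sq, ← mul_assoc, Matrix.sub_apply, Matrix.of_apply, Matrix.cons_val', Matrix.cons_val_zero, Matrix.cons_val_one, Matrix.cons_val, Fin.zero_eta, Fin.mk_one, Fin.reduceFinMk, sub_self, abs_zero] <;> assumption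

lemma simple_conj {P R : Mat3} {lam : ℝ} {n : Fin 3 → ℝ} (h : SimpleMaxEigen P lam n)
    (h1 : R * Rᵀ = 1) (h2 : Rᵀ * R = 1) : SimpleMaxEigen (R * P * Rᵀ) lam (R *ᵥ n) := by
  have back : ∀ (μ : ℝ) (v : Fin 3 → ℝ), IsEigen (R * P * Rᵀ) μ v → IsEigen P μ (Rᵀ *ᵥ v) := by
    intro μ v hv
    have := congrArg (fun w => Rᵀ *ᵥ w) hv
    simp only [Matrix.mulVec_mulVec, Matrix.mulVec_smul] at this
    unfold IsEigen
    rw [Matrix.mulVec_mulVec, ← this]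
    congr 1
    rw [← Matrix.mul_assoc, ← Matrix.mul_assoc, h2, Matrix.one_mul]
  have inj : ∀ v : Fin 3 → ℝ, R *ᵥ (Rᵀ *ᵥ v) = v := fun v => by
    rw [Matrix.mulVec_mulVec, h1, Matrix.one_mulVec]
  refine ⟨⟨?_, ?_, ?_⟩, ?_⟩
  · have : (R *ᵥ n) ⬝ᵥ (R *ᵥ n) = 1 := by
      rw [Matrix.dotProduct_mulVec, Matrix.vecMul_mulVec, ← Matrix.dotProduct_mulVec, h2,
        Matrix.one_mulVec, unit_dot h.1.1]
    unfold unitVec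
    rw [← this]; simp [dotProduct, sq]
  · unfold IsEigen
    rw [Matrix.mulVec_mulVec, Matrix.mul_assoc, h2, Matrix.mul_one, ← Matrix.mulVec_mulVec,
      h.1.2.1, Matrix.mulVec_smul]
  · intro μ v hv0 hv
    refine h.1.2.2 μ (Rᵀ *ᵥ v) ?_ (back μ v hv)
    intro h0
    apply hv0
    rw [← inj v, h0, Matrix.mulVec_zero]
  · intro v hv
    obtain ⟨t, ht⟩ := h.2 _ (back lam v hv)
    exact ⟨t, by rw [← inj v, ht, Matrix.mulVec_smul]⟩

/-- the rotation map -/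
def rotE (s κ x y : ℝ) (P : E9) : E9 :=
  ofM ((1 + Kmat s κ x y) * toM P * (1 + Kmat s κ x y)ᵀ)

lemma rot_sym {s κ x y : ℝ} {P : E9} (hP : P ∈ Sym0E) (hxy : x ^ 2 + y ^ 2 = 1)
    (hk : s ^ 2 = 2 * κ - κ ^ 2) : rotE s κ x y P ∈ Sym0E := by
  unfold rotE
  constructor
  · rw [toM_ofM]
    unfold Matrix.IsSymm
    rw [Matrix.transpose_mul, Matrix.transpose_mul, Matrix.transpose_transpose, hP.1.eq,
      Matrix.mul_assoc]
  · rw [toM_ofM, Matrix.trace_mul_comm, ← Matrix.mul_assoc, K_orth' s κ x y hxy hk, Matrix.one_mul,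
      hP.2]

lemma rot_sub (s κ x y : ℝ) (P : E9) : rotE s κ x y P - P =
    ofM (Kmat s κ x y * toM P) + ofM (toM P * (Kmat s κ x y)ᵀ) +
      ofM (Kmat s κ x y * toM P * (Kmat s κ x y)ᵀ) := by
  conv_lhs => rw [← ofM_toM P]
  unfold rotE
  rw [← ofM_sub, ← ofM_add, ← ofM_add, toM_ofM]
  congr 1
  rw [Matrix.transpose_add, Matrix.transpose_one]
  noncomm_ring

lemma rot_near (s κ x y M : ℝ) (P : E9) (hxy : x ^ 2 + y ^ 2 = 1) (hκ0 : 0 ≤ κ) (hκ : κ ≤ |s|)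
    (hs1 : |s| ≤ 1) (hP : ‖P‖ ≤ M) : ‖rotE s κ x y P - P‖ ≤ 15 * M * |s| := by
  have hM : 0 ≤ M := (norm_nonneg _).trans hP
  have hK := K_bound s κ x y hxy hκ0 hκ
  have h0 := abs_nonneg s
  rw [rot_sub]
  set K := Kmat s κ x y
  have hP' : ‖ofM (toM P)‖ ≤ M := by rwa [ofM_toM]
  have hKt : ‖ofM Kᵀ‖ ≤ 3 * |s| := by rwa [ofM_tr]
  have a1 : ‖ofM (K * toM P)‖ ≤ 3 * |s| * M := (ofM_mul _ _).trans (by gcongr)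
  have a2 : ‖ofM (toM P * Kᵀ)‖ ≤ M * (3 * |s|) := (ofM_mul _ _).trans (by gcongr)
  have a3 : ‖ofM (K * toM P * Kᵀ)‖ ≤ (3 * |s| * M) * (3 * 1) :=
    (ofM_mul _ _).trans (by
      have : ‖ofM Kᵀ‖ ≤ 3 * 1 := hKt.trans (by gcongr)
      gcongr)
  refine (norm_add₃_le).trans ?_
  nlinarith

lemma rot_lip (s κ x y x' y' M L : ℝ) (P P' : E9) (hxy : x ^ 2 + y ^ 2 = 1)
    (hxy' : x' ^ 2 + y' ^ 2 = 1) (hκ0 : 0 ≤ κ) (hκ : κ ≤ |s|)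
    (hs1 : |s| ≤ 1) (hP : ‖P‖ ≤ M) (hP' : ‖P'‖ ≤ M) (hL : 0 ≤ L)
    (hdx : |x - x'| ≤ L * ‖P - P'‖) (hdy : |y - y'| ≤ L * ‖P - P'‖) :
    ‖(rotE s κ x y P - P) - (rotE s κ x' y' P' - P')‖ ≤ (48 * L * M + 15) * |s| * ‖P - P'‖ := by
  have hM : 0 ≤ M := (norm_nonneg _).trans hP
  have hK := K_bound s κ x y hxy hκ0 hκ
  have hK' := K_bound s κ x' y' hxy' hκ0 hκ
  have hd := K_lip s κ x y x' y' _ hxy hxy' hκ0 hκ hdx hdy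
  have h0 := abs_nonneg s
  rw [rot_sub, rot_sub]
  set K := Kmat s κ x y
  set K' := Kmat s κ x' y'
  set D := ‖P - P'‖ with hD
  have hD0 : 0 ≤ D := norm_nonneg _
  have hdt : ‖ofM (Kᵀ - K'ᵀ)‖ ≤ 6 * |s| * (L * D) := by
    rw [← Matrix.transpose_sub, ofM_tr]; exact hd
  have n1 : ‖ofM (toM P)‖ ≤ M := by rwa [ofM_toM]
  have n1' : ‖ofM (toM P')‖ ≤ M := by rwa [ofM_toM]
  have n2 : ‖ofM (toM P - toM P')‖ ≤ D := by rw [← toM_sub, ofM_toM]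
  have hKt : ‖ofM Kᵀ‖ ≤ 3 * |s| := by rwa [ofM_tr]
  have hKt1 : ‖ofM Kᵀ‖ ≤ 3 * 1 := hKt.trans (by gcongr)
  have hK't : ‖ofM K'ᵀ‖ ≤ 3 * |s| := by rwa [ofM_tr]
  have hKP' : ‖ofM (K' * toM P')‖ ≤ 3 * 1 * M := (ofM_mul _ _).trans (by
    have : ‖ofM K'‖ ≤ 3 * 1 := hK'.trans (by gcongr)
    gcongr)
  have a1 : ‖ofM (K * toM P - K' * toM P')‖ ≤ 6 * |s| * (L * D) * M + 3 * |s| * D := by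
    have : K * toM P - K' * toM P' = (K - K') * toM P + K' * (toM P - toM P') := by noncomm_ring
    rw [this, ofM_add]
    refine (norm_add_le _ _).trans (add_le_add ((ofM_mul _ _).trans ?_) ((ofM_mul _ _).trans ?_))
    · gcongr
    · gcongr
  have a2 : ‖ofM (toM P * Kᵀ - toM P' * K'ᵀ)‖ ≤ M * (6 * |s| * (L * D)) + D * (3 * |s|) := by
    have : toM P * Kᵀ - toM P' * K'ᵀ = toM P * (Kᵀ - K'ᵀ) + (toM P - toM P') * K'ᵀ := by
      noncomm_ring
    rw [this, ofM_add]
    refine (norm_add_le _ _).trans (add_le_add ((ofM_mul _ _).trans ?_) ((ofM_mul _ _).trans ?_))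
    · gcongr
    · gcongr
  have a3 : ‖ofM (K * toM P * Kᵀ - K' * toM P' * K'ᵀ)‖ ≤
      (6 * |s| * (L * D) * M + 3 * |s| * D) * (3 * 1) + (3 * 1 * M) * (6 * |s| * (L * D)) := by
    have : K * toM P * Kᵀ - K' * toM P' * K'ᵀ =
        (K * toM P - K' * toM P') * Kᵀ + K' * toM P' * (Kᵀ - K'ᵀ) := by noncomm_ring
    rw [this, ofM_add]
    refine (norm_add_le _ _).trans (add_le_add ((ofM_mul _ _).trans ?_) ((ofM_mul _ _).trans ?_))
    · gcongr
    · gcongr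
  have e : ofM (K * toM P) + ofM (toM P * Kᵀ) + ofM (K * toM P * Kᵀ) -
      (ofM (K' * toM P') + ofM (toM P' * K'ᵀ) + ofM (K' * toM P' * K'ᵀ)) =
      ofM (K * toM P - K' * toM P') + ofM (toM P * Kᵀ - toM P' * K'ᵀ) +
        ofM (K * toM P * Kᵀ - K' * toM P' * K'ᵀ) := by
    simp only [ofM_sub]; abel
  rw [e]
  refine (norm_add₃_le).trans ((add_le_add (add_le_add a1 a2) a3).trans (le_of_eq ?_))
  ring

lemma meas_le (S : Set E9) (f : E9 → E9) (ε : ℝ) (hε : ε < 1)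
    (h : ∀ P ∈ S, ∀ P' ∈ S, ‖(f P - P) - (f P' - P')‖ ≤ ε * ‖P - P'‖) :
    μH[4] S ≤ (ENNReal.ofReal ((1 - ε)⁻¹)) ^ (4 : ℝ) * μH[4] (f '' S) := by
  have hpos : 0 < 1 - ε := by linarith
  have ha : AntilipschitzWith (Real.toNNReal (1 - ε)⁻¹) (fun x : S => f x) := by
    apply AntilipschitzWith.of_le_mul_dist
    intro P P'
    rw [Real.coe_toNNReal _ (inv_nonneg.2 hpos.le), Subtype.dist_eq, dist_eq_norm, dist_eq_norm]
    have h1 := h P P.2 P' P'.2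
    have e : (P : E9) - P' = (f P - f P') - ((f P - P) - (f P' - P')) := by abel
    have h2 : ‖(P : E9) - P'‖ ≤ ‖f P - f P'‖ + ‖(f P - P) - (f P' - P')‖ := by
      conv_lhs => rw [e]
      exact norm_sub_le _ _
    rw [inv_mul_eq_div, le_div_iff₀ hpos]
    nlinarith
  have h3 := ha.le_hausdorffMeasure_image (d := 4) (by norm_num) univ
  have h4 := (isometry_subtype_coe (s := S)).hausdorffMeasure_image (d := 4)
    (Or.inl (by norm_num)) univ
  rw [image_univ, Subtype.range_coe] at h4
  rw [h4]
  have h5 : (fun x : S => f x) '' univ = f '' S := by ext y; simp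
  rw [h5] at h3
  exact h3

def Fpar (x : Fin 4 → ℝ) : E9 :=
  ofM !![x 3 + x 1 * (Real.cos (x 0) ^ 2 - Real.sin (x 0) ^ 2), 2 * x 1 * Real.cos (x 0) * Real.sin (x 0), - x 2 * Real.sin (x 0);
    2 * x 1 * Real.cos (x 0) * Real.sin (x 0), x 3 - x 1 * (Real.cos (x 0) ^ 2 - Real.sin (x 0) ^ 2), x 2 * Real.cos (x 0);
    - x 2 * Real.sin (x 0), x 2 * Real.cos (x 0), - 2 * x 3]

lemma Fpar_contDiff : ContDiff ℝ 1 Fpar := by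
  rw [contDiff_euclidean]
  rintro ⟨i, j⟩
  fin_cases i <;> fin_cases j <;> simp [Fpar, ofM] <;> fun_prop

lemma par_exists (A : E9) (hA : A ∈ TsetE) : ∃ x : Fin 4 → ℝ,
    x ∈ Icc (fun _ => - (‖A‖ * 4 + 4)) (fun _ => ‖A‖ * 4 + 4) ∧ Fpar x = A := by
  obtain ⟨hS, -, lam, n, hsim, hn2⟩ := hA
  have hu := hsim.1.1
  unfold unitVec at hu
  rw [Fin.sum_univ_three, hn2] at hu
  have hu1 : n 0 ^ 2 + n 1 ^ 2 = 1 := by linarith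
  obtain ⟨θ, h1, h2, h3, h4⟩ : ∃ θ : ℝ, Real.cos θ = n 0 ∧ Real.sin θ = n 1 ∧ -4 ≤ θ ∧ θ ≤ 4 := by
    set z : ℂ := ⟨n 0, n 1⟩
    have hz : ‖z‖ = 1 := by
      rw [← sq_eq_sq₀ (norm_nonneg _) zero_le_one, Complex.sq_norm, Complex.normSq_apply]
      simp only [z]; nlinarith
    have hz0 : z ≠ 0 := by intro h; rw [h] at hz; simp at hz
    refine ⟨Complex.arg z, ?_, ?_, ?_, ?_⟩
    · rw [Complex.cos_arg hz0, hz]; simp [z]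
    · rw [Complex.sin_arg, hz]; simp [z]
    · linarith [Complex.neg_pi_lt_arg z, Real.pi_lt_four]
    · linarith [Complex.arg_le_pi z, Real.pi_lt_four]
  have hent : ∀ p, |A p| ≤ ‖A‖ := fun p => by
    simpa using PiLp.norm_apply_le A p
  have he : toM A *ᵥ n = lam • n := hsim.1.2.1
  have e0 := congrFun he 0
  have e1 := congrFun he 1
  have e2 := congrFun he 2
  simp only [Matrix.mulVec, dotProduct, Fin.sum_univ_three, hn2, Pi.smul_apply, smul_eq_mul, toM,
    Matrix.of_apply, mul_zero, add_zero] at e0 e1 e2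
  have sy : ∀ i j, A (i, j) = A (j, i) := fun i j => by
    have := congrFun (congrFun hS.1.eq j) i
    simpa [toM] using this
  have tr := hS.2
  simp only [Matrix.trace, Matrix.diag, Fin.sum_univ_three, toM, Matrix.of_apply] at tr
  have s10 := sy 1 0
  have s20 := sy 2 0
  have s21 := sy 2 1
  rw [s10] at e1
  rw [s20, s21] at e2
  have b00 := abs_le.1 (hent (0, 0))
  have b01 := abs_le.1 (hent (0, 1))
  have b02 := abs_le.1 (hent (0, 2))
  have b11 := abs_le.1 (hent (1, 1))
  have b12 := abs_le.1 (hent (1, 2))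
  have hn := norm_nonneg A
  generalize hp : A (0, 0) = p at *
  generalize hq : A (0, 1) = q at *
  generalize hr : A (1, 1) = r at *
  generalize hu' : A (0, 2) = u at *
  generalize hv : A (1, 2) = v at *
  generalize hw : A (2, 2) = w at *
  set t := (p + r) / 2 with ht
  set a := lam - t with ha
  set b := -u * n 1 + v * n 0 with hb
  have f1 : (p - r) / 2 = a * (n 0 ^ 2 - n 1 ^ 2) := by
    rw [ha, ht]; linear_combination (-(p - r) / 2) * hu1 + n 0 * e0 - n 1 * e1
  have f2 : q = 2 * a * n 0 * n 1 := by
    rw [ha, ht]; linear_combination (-q) * hu1 + n 1 * e0 + n 0 * e1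
  have f3 : u = - b * n 1 := by rw [hb]; linear_combination (-u) * hu1 + n 0 * e2
  have f4 : v = b * n 0 := by rw [hb]; linear_combination (-v) * hu1 + n 1 * e2
  have ga : |a| ≤ ‖A‖ * 4 := by
    apply abs_le_of_sq_le_sq _ (by positivity)
    have : a ^ 2 = ((p - r) / 2) ^ 2 + q ^ 2 := by
      rw [f1, f2]; linear_combination (-a ^ 2 * (n 0 ^ 2 + n 1 ^ 2 + 1)) * hu1
    have q1 := sq_le_sq' b01.1 b01.2
    have q2 : ((p - r) / 2) ^ 2 ≤ ‖A‖ ^ 2 := sq_le_sq' (by linarith) (by linarith)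
    have q3 := sq_nonneg ‖A‖
    rw [this, mul_pow]; linarith
  have gb : |b| ≤ ‖A‖ * 4 := by
    apply abs_le_of_sq_le_sq _ (by positivity)
    have : b ^ 2 = u ^ 2 + v ^ 2 := by
      rw [f3, f4]; linear_combination (-b ^ 2) * hu1
    have q1 := sq_le_sq' b02.1 b02.2
    have q2 := sq_le_sq' b12.1 b12.2
    have q3 := sq_nonneg ‖A‖
    rw [this, mul_pow]; linarith
  clear_value a b t
  have ga' := abs_le.1 ga
  have gb' := abs_le.1 gb
  refine ⟨![θ, a, b, t], ⟨fun i => ?_, fun i => ?_⟩, ?_⟩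
  · fin_cases i <;> simp <;> linarith
  · fin_cases i <;> simp <;> linarith
  · ext ⟨i, j⟩
    fin_cases i <;> fin_cases j <;> simp [Fpar, ofM, h1, h2, hp, hq, hr, hu', hv, hw, s10, s20, s21] <;> linarith

lemma T_meas (Q : E9) (α : ℝ) :
    μH[4] (closedBall Q α ∩ TsetE) < ⊤ ∧ μH[4] (sphere Q α ∩ TsetE) = 0 := by
  set B := (‖Q‖ + α) * 4 + 4 with hB
  set K : Set (Fin 4 → ℝ) := Icc (fun _ => - B) (fun _ => B) with hK
  have hKc : IsCompact K := isCompact_Icc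
  obtain ⟨C, hC⟩ := Fpar_contDiff.contDiffOn (s := K).exists_lipschitzOnWith one_ne_zero
    (convex_Icc _ _) hKc
  have hH : (μH[4] : Measure (Fin 4 → ℝ)) = volume := by
    have := hausdorffMeasure_pi_real (ι := Fin 4)
    simpa using this
  have hsub : ∀ A ∈ closedBall Q α ∩ TsetE, ∃ x ∈ K, Fpar x = A := by
    intro A hA
    obtain ⟨x, hx, hxA⟩ := par_exists A hA.2
    have hn : ‖A‖ ≤ ‖Q‖ + α := by
      have h1 := mem_closedBall.1 hA.1
      rw [dist_eq_norm] at h1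
      have := norm_add_le Q (A - Q)
      rw [add_sub_cancel] at this
      linarith
    refine ⟨x, ⟨fun i => ?_, fun i => ?_⟩, hxA⟩
    · have := hx.1 i
      simp only at this ⊢
      linarith
    · have := hx.2 i
      simp only at this ⊢
      linarith
  have hnull : volume {x : Fin 4 → ℝ | ‖Fpar x - Q‖ = α} = 0 := by
    let L : ℝ →ₗ[ℝ] (Fin 4 → ℝ) := LinearMap.toSpanSingleton ℝ _ (Pi.single 3 1)
    have hcl : IsClosed {x : Fin 4 → ℝ | ‖Fpar x - Q‖ = α} :=
      isClosed_eq ((Fpar_contDiff.continuous.sub continuous_const).norm) continuous_const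
    have := ae_mem_of_ae_add_linearMap_mem L volume volume
      (s := {x : Fin 4 → ℝ | ‖Fpar x - Q‖ = α}ᶜ) hcl.measurableSet.compl ?_
    · rw [ae_iff] at this
      simpa using this
    intro y
    set c := Fpar y - Q with hc
    set E : E9 := ofM !![1, 0, 0; 0, 1, 0; 0, 0, -2] with hE
    have hF : ∀ t : ℝ, Fpar (y + L t) - Q = c + t • E := by
      intro t
      ext ⟨i, j⟩
      fin_cases i <;> fin_cases j <;> simp [hc, hE, Fpar, ofM, L] <;> ring
    have hE6 : ‖E‖ ^ 2 = 6 := by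
      rw [hE, ofM_norm_sq]; simp [Fin.sum_univ_three]; norm_num
    have hfin : {t : ℝ | ‖Fpar (y + L t) - Q‖ = α}.Finite := by
      let p : Polynomial ℝ := Polynomial.C 6 * Polynomial.X ^ 2 +
        Polynomial.C (2 * inner ℝ c E) * Polynomial.X + Polynomial.C (‖c‖ ^ 2 - α ^ 2)
      have hp : p ≠ 0 := by
        intro h0
        have := Polynomial.natDegree_quadratic (a := (6:ℝ)) (b := 2 * inner ℝ c E)
          (c := ‖c‖ ^ 2 - α ^ 2) (by norm_num)
        change p.natDegree = 2 at this
        rw [h0] at this; simp at this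
      refine (Polynomial.finite_setOfPred_isRoot hp).subset ?_
      intro t ht
      simp only [mem_ofPred_eq] at ht ⊢
      rw [hF] at ht
      have h2 : ‖c + t • E‖ ^ 2 = α ^ 2 := by rw [ht]
      rw [norm_add_sq_real, norm_smul, inner_smul_right, mul_pow, hE6] at h2
      simp only [Real.norm_eq_abs, sq_abs] at h2
      simp only [Polynomial.IsRoot, p, Polynomial.eval_add, Polynomial.eval_mul, Polynomial.eval_C,
        Polynomial.eval_pow, Polynomial.eval_X]
      linarith
    rw [ae_iff]
    simpa using hfin.measure_zero volume
  constructor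
  · have h1 : closedBall Q α ∩ TsetE ⊆ Fpar '' K := fun A hA => hsub A hA
    refine (measure_mono h1).trans_lt ((hC.hausdorffMeasure_image_le (d := 4) (by norm_num)).trans_lt ?_)
    rw [hH]
    exact ENNReal.mul_lt_top (ENNReal.rpow_lt_top_of_nonneg (by norm_num) (by simp)) hKc.measure_lt_top
  · have h1 : sphere Q α ∩ TsetE ⊆ Fpar '' (K ∩ {x | ‖Fpar x - Q‖ = α}) := by
      intro A hA
      obtain ⟨x, hx, hxA⟩ := hsub A ⟨sphere_subset_closedBall hA.1, hA.2⟩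
      refine ⟨x, ⟨hx, ?_⟩, hxA⟩
      have := mem_sphere.1 hA.1
      rw [dist_eq_norm] at this
      simpa [hxA] using this
    refine measure_mono_null h1 (le_antisymm ?_ bot_le)
    refine ((hC.mono inter_subset_left).hausdorffMeasure_image_le (d := 4) (by norm_num)).trans ?_
    rw [hH, measure_mono_null inter_subset_right hnull]
    simp

open Topology in
lemma limit_lemma (T : Set E9) (Q : E9) (α C : ℝ) (f : ℝ → ENNReal) (hC : 0 < C)
    (hfin : ∀ r, μH[4] (closedBall Q r ∩ T) < ⊤) (hsph : μH[4] (sphere Q α ∩ T) = 0)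
    (h1 : ∀ s : ℝ, |s| ≤ 1 / 2 → C * |s| < 1 → f s ≤
      (ENNReal.ofReal ((1 - C * |s|)⁻¹)) ^ (4 : ℝ) * μH[4] (ball Q (α + C * |s|) ∩ T))
    (h2 : ∀ s : ℝ, |s| ≤ 1 / 2 → C * |s| < 1 → μH[4] (ball Q (α - C * |s|) ∩ T) ≤
      (ENNReal.ofReal ((1 - C * |s|)⁻¹)) ^ (4 : ℝ) * f s) :
    Tendsto f (𝓝[{(0:ℝ)}ᶜ] 0) (𝓝 (μH[4] (ball Q α ∩ T))) := by
  set ν : Measure E9 := (μH[4] : Measure E9).restrict T with hν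
  have hνb : ∀ r, μH[4] (ball Q r ∩ T) = ν (ball Q r) := fun r => by
    rw [hν, Measure.restrict_apply measurableSet_ball]
  have hνc : ∀ r, ν (closedBall Q r) < ⊤ := fun r => by
    rw [hν, Measure.restrict_apply measurableSet_closedBall]; exact hfin r
  have hνs : ν (sphere Q α) = 0 := by
    rw [hν, Measure.restrict_apply isClosed_sphere.measurableSet]; exact hsph
  simp only [hνb] at h1 h2 ⊢
  set D : ℝ → Set E9 := fun ε => ball Q (α + ε) \ ball Q (α - ε) with hD
  have hDt : Tendsto (ν ∘ D) (𝓝[>] 0) (𝓝 0) := by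
    have := tendsto_measure_biInter_gt (μ := ν) (s := D) (a := (0:ℝ))
      (fun r _ => (measurableSet_ball.diff measurableSet_ball).nullMeasurableSet)
      (fun i j _ hij => sdiff_subset_sdiff (ball_subset_ball (by linarith))
        (ball_subset_ball (by linarith)))
      ⟨1, one_pos, ((measure_mono (sdiff_subset.trans ball_subset_closedBall)).trans_lt
        (hνc (α + 1))).ne⟩
    have h0 : ν (⋂ r > (0:ℝ), D r) = 0 := by
      refine measure_mono_null ?_ hνs
      intro P hP
      simp only [mem_iInter, hD, Set.mem_sdiff, mem_ball, not_lt] at hP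
      rw [mem_sphere]
      apply le_antisymm
      · apply le_of_forall_pos_le_add
        intro ε hε; exact (hP ε hε).1.le
      · apply le_of_forall_pos_le_add
        intro ε hε; linarith [(hP ε hε).2]
    rwa [h0] at this
  have hCs : Tendsto (fun s : ℝ => C * |s|) (𝓝[{(0:ℝ)}ᶜ] 0) (𝓝[>] 0) := by
    apply tendsto_nhdsWithin_of_tendsto_nhds_of_eventually_within
    · have : Continuous (fun s : ℝ => C * |s|) := by fun_prop
      have := this.tendsto 0
      simp only [abs_zero, mul_zero] at this
      exact this.mono_left nhdsWithin_le_nhds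
    · filter_upwards [self_mem_nhdsWithin] with s hs
      have : 0 < |s| := abs_pos.2 hs
      exact mul_pos hC this
  have hCs0 := hCs.mono_right nhdsWithin_le_nhds
  have hd := hDt.comp hCs
  have ev1 : ∀ᶠ s : ℝ in 𝓝[{(0:ℝ)}ᶜ] 0, C * |s| < 1 := hCs0.eventually (gt_mem_nhds one_pos)
  have ev2 : ∀ᶠ s : ℝ in 𝓝[{(0:ℝ)}ᶜ] 0, |s| ≤ 1 / 2 := by
    have : Tendsto (fun s : ℝ => |s|) (𝓝[{(0:ℝ)}ᶜ] 0) (𝓝 0) := by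
      have := (continuous_abs (G := ℝ)).tendsto 0
      simp only [abs_zero] at this
      exact this.mono_left nhdsWithin_le_nhds
    exact (this.eventually (gt_mem_nhds (by norm_num : (0:ℝ) < 1/2))).mono fun s hs => hs.le
  set m := ν (ball Q α) with hm
  have hmfin : m ≠ ⊤ := ((measure_mono ball_subset_closedBall).trans_lt (hνc α)).ne
  have hg : Tendsto (fun s : ℝ => (ENNReal.ofReal ((1 - C * |s|)⁻¹)) ^ (4 : ℝ))
      (𝓝[{(0:ℝ)}ᶜ] 0) (𝓝 1) := by
    have t1 : Tendsto (fun s : ℝ => (1 - C * |s|)⁻¹) (𝓝[{(0:ℝ)}ᶜ] 0) (𝓝 1) := by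
      have := (tendsto_const_nhds (x := (1:ℝ))).sub hCs0 |>.inv₀ (by norm_num)
      simpa using this
    have := (ENNReal.continuous_rpow_const (y := 4)).tendsto _ |>.comp (ENNReal.tendsto_ofReal t1)
    simpa [Function.comp_def] using this
  have hk : Tendsto (fun s : ℝ => (ENNReal.ofReal (1 - C * |s|)) ^ (4 : ℝ))
      (𝓝[{(0:ℝ)}ᶜ] 0) (𝓝 1) := by
    have t1 : Tendsto (fun s : ℝ => (1 - C * |s|)) (𝓝[{(0:ℝ)}ᶜ] 0) (𝓝 1) := by
      have := (tendsto_const_nhds (x := (1:ℝ))).sub hCs0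
      simpa using this
    have := (ENNReal.continuous_rpow_const (y := 4)).tendsto _ |>.comp (ENNReal.tendsto_ofReal t1)
    simpa [Function.comp_def] using this
  have up : Tendsto (fun s : ℝ => (ENNReal.ofReal ((1 - C * |s|)⁻¹)) ^ (4 : ℝ) *
      (m + ν (D (C * |s|)))) (𝓝[{(0:ℝ)}ᶜ] 0) (𝓝 m) := by
    have t := ENNReal.Tendsto.mul hg (Or.inr (by simpa using hmfin))
      ((tendsto_const_nhds (x := m)).add hd) (Or.inr (by simp))
    simpa using t
  have low : Tendsto (fun s : ℝ => (ENNReal.ofReal (1 - C * |s|)) ^ (4 : ℝ) *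
      (m - ν (D (C * |s|)))) (𝓝[{(0:ℝ)}ᶜ] 0) (𝓝 m) := by
    have t := ENNReal.Tendsto.mul hk (Or.inr (by simpa using hmfin))
      (ENNReal.Tendsto.sub (tendsto_const_nhds (x := m)) hd (Or.inl hmfin)) (Or.inr (by simp))
    simpa using t
  refine tendsto_of_tendsto_of_tendsto_of_le_of_le' low up ?_ ?_
  · filter_upwards [ev1, ev2] with s e1 e2
    have hpos : 0 < 1 - C * |s| := by linarith
    have hgk : (ENNReal.ofReal (1 - C * |s|)) ^ (4 : ℝ) *
        (ENNReal.ofReal ((1 - C * |s|)⁻¹)) ^ (4 : ℝ) = 1 := by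
      rw [← ENNReal.mul_rpow_of_nonneg _ _ (by norm_num), ← ENNReal.ofReal_mul hpos.le,
        mul_inv_cancel₀ hpos.ne']
      simp
    have hle : m - ν (D (C * |s|)) ≤ ν (ball Q (α - C * |s|)) := by
      rw [tsub_le_iff_right]
      refine (measure_mono ?_).trans (measure_union_le _ _)
      intro P hP
      by_cases h : P ∈ ball Q (α - C * |s|)
      · exact Or.inl h
      · refine Or.inr ⟨ball_subset_ball ?_ hP, h⟩
        have := abs_nonneg s
        nlinarith
    calc _ ≤ (ENNReal.ofReal (1 - C * |s|)) ^ (4 : ℝ) *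
          ((ENNReal.ofReal ((1 - C * |s|)⁻¹)) ^ (4 : ℝ) * f s) := by
          gcongr
          exact hle.trans (h2 s e2 e1)
      _ = f s := by rw [← mul_assoc, hgk, one_mul]
  · filter_upwards [ev1, ev2] with s e1 e2
    refine (h1 s e2 e1).trans ?_
    gcongr
    refine (measure_mono ?_).trans (measure_union_le _ _)
    intro P hP
    by_cases h : P ∈ ball Q α
    · exact Or.inl h
    · refine Or.inr ⟨hP, fun h' => h (ball_subset_ball ?_ h')⟩
      have := abs_nonneg s
      nlinarith

lemma max_unique {A : Mat3} {lam lam' : ℝ} {n n' : Fin 3 → ℝ} (h : SimpleMaxEigen A lam n)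
    (h' : MaxEigen A lam' n') : ∃ t : ℝ, n' = t • n ∧ t ^ 2 = 1 := by
  have ne : ∀ {k : Fin 3 → ℝ}, unitVec k → k ≠ 0 := by
    intro k hk h0
    have := unit_dot hk
    rw [h0] at this; simp at this
  have e : lam' = lam :=
    le_antisymm (h.1.2.2 _ _ (ne h'.1) h'.2.1) (h'.2.2 _ _ (ne h.1.1) h.1.2.1)
  subst e
  obtain ⟨t, ht⟩ := h.2 _ h'.2.1
  refine ⟨t, ht, ?_⟩
  have := unit_dot h'.1
  rw [ht, dotProduct_smul, smul_dotProduct, unit_dot h.1.1] at this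
  simp at this
  nlinarith

lemma sym_comb (a b : ℝ) {x y : E9} (hx : x ∈ Sym0E) (hy : y ∈ Sym0E) : a • x + b • y ∈ Sym0E := by
  have e : toM (a • x + b • y) = a • toM x + b • toM y := by ext i j; simp [toM]
  constructor
  · rw [e]
    unfold Matrix.IsSymm
    rw [Matrix.transpose_add, Matrix.transpose_smul, Matrix.transpose_smul, hx.1.eq, hy.1.eq]
  · rw [e, Matrix.trace_add, Matrix.trace_smul, Matrix.trace_smul, hx.2, hy.2]; simp

lemma K_mulVec (s κ x y : ℝ) (n : Fin 3 → ℝ) : (1 + Kmat s κ x y) *ᵥ n =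
    ![n 0 - κ * x * (x * n 0 + y * n 1) - s * x * n 2, n 1 - κ * y * (x * n 0 + y * n 1) - s * y * n 2,
      s * (x * n 0 + y * n 1) + (1 - κ) * n 2] := by
  rw [Matrix.add_mulVec, Matrix.one_mulVec]
  ext i
  fin_cases i <;> simp [Kmat, Matrix.mulVec, dotProduct, Fin.sum_univ_three] <;> ring

lemma kappa_exists (s : ℝ) (hs : |s| ≤ 1 / 2) : ∃ κ : ℝ, s ^ 2 = 2 * κ - κ ^ 2 ∧ 0 ≤ κ ∧ κ ≤ |s| := by
  have h0 := abs_nonneg s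
  have hsq : s ^ 2 = |s| ^ 2 := (sq_abs s).symm
  have h1 : 0 ≤ 1 - s ^ 2 := by rw [hsq]; nlinarith
  refine ⟨1 - √(1 - s ^ 2), ?_, ?_, ?_⟩
  · have := Real.sq_sqrt h1; nlinarith
  · have : √(1 - s ^ 2) ≤ 1 := Real.sqrt_le_one.2 (by nlinarith [sq_nonneg s])
    linarith
  · have : 1 - |s| ≤ √(1 - s ^ 2) := by
      apply Real.le_sqrt_of_sq_le; rw [hsq]; nlinarith
    linarith

lemma simple_ne_zero {A : E9} {lam : ℝ} {n : Fin 3 → ℝ} (h : SimpleMaxEigen (toM A) lam n)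
    (hl : 0 < lam) : A ≠ 0 := by
  intro h0
  have e : toM A *ᵥ n = lam • n := h.1.2.1
  have : toM A = 0 := by rw [h0]; ext i j; simp [toM]
  rw [this, Matrix.zero_mulVec] at e
  have := unit_dot h.1.1
  have h2 : n ⬝ᵥ (lam • n) = 0 := by rw [← e]; simp
  rw [dotProduct_smul, this] at h2
  simp at h2
  linarith

lemma main_aux (sS : ℝ) (hs : 0 < sS) (Q : E9) (hQ : Q ∈ Sym0E)
    (hinf : infDist Q (NsetE sS) ≤ sS / 100) (α : ℝ) (hα : 0 < α) (hα1 : α < sS / 100)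
    (nsel : E9 → (Fin 3 → ℝ)) (hcont : ContinuousOn nsel (ball Q α ∩ Sym0E))
    (hsel : ∀ P ∈ ball Q α ∩ Sym0E,
        unitVec (nsel P) ∧ ∃ lam : ℝ, MaxEigen (toM P) lam (nsel P)) :
    Tendsto (fun s : ℝ =>
          μH[4] {Y : E9 | Y ∈ Sym0E ∧ Y ∈ ball (0 : E9) α ∧ nsel (Q - Y) 2 = s})
        (nhdsWithin 0 {(0 : ℝ)}ᶜ)
        (nhds (μH[4] (ball Q α ∩ TsetE))) := by
  obtain ⟨N0, ⟨m, hm, hN0⟩, hdN⟩ : ∃ N0 ∈ NsetE sS, dist Q N0 < 2 * sS / 100 := by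
    have hne : (NsetE sS).Nonempty :=
      ⟨ofM (uniax sS ![1, 0, 0]), ![1, 0, 0], by simp [unitVec, Fin.sum_univ_three], toM_ofM _⟩
    exact (infDist_lt_iff hne).1 (by linarith)
  have hnear : ∀ P ∈ ball Q α ∩ Sym0E, ∃ lam, Near sS P lam (nsel P) := by
    intro P hP
    obtain ⟨-, lam, hl⟩ := hsel P hP
    refine ⟨lam, near_of sS hs P N0 m hm hN0 hP.2 ?_ lam _ hl⟩
    rw [← dist_eq_norm]
    have := dist_triangle P Q N0
    have := mem_ball.1 hP.1
    linarith
  have hconv : Convex ℝ (ball Q α ∩ Sym0E) :=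
    (convex_ball Q α).inter (fun x hx y hy a b _ _ _ => sym_comb a b hx hy)
  have hdist : ∀ P ∈ ball Q α ∩ Sym0E, ∀ P' ∈ ball Q α ∩ Sym0E, ‖P - P'‖ ≤ sS / 50 := by
    intro P hP P' hP'
    rw [← dist_eq_norm]
    have := dist_triangle_right P P' Q
    have := mem_ball.1 hP.1
    have := mem_ball.1 hP'.1
    linarith
  have hsign : ∀ P ∈ ball Q α ∩ Sym0E, ∀ P' ∈ ball Q α ∩ Sym0E, 0 < nsel P ⬝ᵥ nsel P' := by
    intro P hP P' hP'
    by_contra hneg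
    have hc : ContinuousOn (fun X => nsel P ⬝ᵥ nsel X) (ball Q α ∩ Sym0E) := by
      simp only [dotProduct]
      exact continuousOn_finsetSum _ fun i _ =>
        continuousOn_const.mul ((continuous_apply i).comp_continuousOn hcont)
    have hiv := hconv.isPreconnected.intermediate_value hP' hP hc
    have h1 : nsel P ⬝ᵥ nsel P = 1 := unit_dot (hsel P hP).1
    obtain ⟨X, hX, hX0⟩ := hiv (show (0:ℝ) ∈ Icc _ _ from ⟨not_lt.1 hneg, by simp [h1]⟩)
    obtain ⟨l, hl⟩ := hnear P hP
    obtain ⟨l', hl'⟩ := hnear X hX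
    have := near_lip hs hl hl'
    simp only at hX0
    rw [hX0] at this
    have hd := hdist P hP X hX
    have h0 := norm_nonneg (P - X)
    have h2 := pow_le_pow_left₀ h0 hd 2
    nlinarith
  have hlip : ∀ P ∈ ball Q α ∩ Sym0E, ∀ P' ∈ ball Q α ∩ Sym0E, ∀ i,
      |nsel P i - nsel P' i| ≤ 6 / sS * ‖P - P'‖ := by
    intro P hP P' hP' i
    obtain ⟨l, hl⟩ := hnear P hP
    obtain ⟨l', hl'⟩ := hnear P' hP'
    have h1 := near_lip hs hl hl'
    have h2 := hsign P hP P' hP'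
    have e1 := unit_dot (hsel P hP).1
    have e2 := unit_dot (hsel P' hP').1
    have h3 : ∑ j, (nsel P j - nsel P' j) ^ 2 = 2 - 2 * (nsel P ⬝ᵥ nsel P') := by
      have : ∑ j, (nsel P j - nsel P' j) ^ 2 =
        nsel P ⬝ᵥ nsel P + nsel P' ⬝ᵥ nsel P' - 2 * (nsel P ⬝ᵥ nsel P') := by
        simp only [dotProduct, Fin.sum_univ_three]; ring
      rw [this, e1, e2]; ring
    have h4 : (nsel P i - nsel P' i) ^ 2 ≤ ∑ j, (nsel P j - nsel P' j) ^ 2 :=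
      Finset.single_le_sum (f := fun j => (nsel P j - nsel P' j) ^ 2)
        (fun j _ => sq_nonneg _) (Finset.mem_univ i)
    have h5 : 0 ≤ ∑ j, (nsel P j - nsel P' j) ^ 2 := Finset.sum_nonneg fun j _ => sq_nonneg _
    set a := nsel P ⬝ᵥ nsel P'
    have h6 : a ≤ 1 := by linarith
    apply abs_le_of_sq_le_sq _ (by positivity)
    rw [mul_pow, div_pow, div_mul_eq_mul_div, le_div_iff₀ (by positivity)]
    have h7 : (nsel P i - nsel P' i) ^ 2 ≤ 2 * (1 - a ^ 2) := by nlinarith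
    have h8 := mul_le_mul_of_nonneg_right h7 (sq_nonneg sS)
    nlinarith [sq_nonneg ‖P - P'‖]
  set M := ‖Q‖ + α with hM
  have hM0 : 0 ≤ M := by positivity
  have hMb : ∀ P ∈ ball Q α ∩ Sym0E, ‖P‖ ≤ M := by
    intro P hP
    have h1 := mem_ball.1 hP.1
    rw [dist_eq_norm] at h1
    have := norm_add_le Q (P - Q)
    rw [add_sub_cancel] at this
    linarith
  set L := 12 / sS with hL
  have hL0 : 0 < L := by positivity
  set C := 48 * L * M + 15 * M + 15 with hC
  have hC0 : 0 < C := by positivity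
  set S : ℝ → Set E9 := fun s => {P | P ∈ ball Q α ∩ Sym0E ∧ nsel P 2 = s} with hS
  have hAS : ∀ s, μH[4] {Y : E9 | Y ∈ Sym0E ∧ Y ∈ ball (0 : E9) α ∧ nsel (Q - Y) 2 = s} =
      μH[4] (S s) := by
    intro s
    rw [← (IsometryEquiv.subLeft Q).hausdorffMeasure_preimage 4 (S s)]
    congr 1
    ext Y
    have hsy : Y ∈ Sym0E ↔ Q - Y ∈ Sym0E := by
      constructor
      · intro h; simpa [sub_eq_add_neg] using sym_comb 1 (-1) hQ h
      · intro h; simpa using sym_comb 1 (-1) hQ h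
    have hb : Y ∈ ball (0 : E9) α ↔ Q - Y ∈ ball Q α := by
      simp [mem_ball, dist_eq_norm]
    simp only [hS, mem_ofPred_eq, mem_preimage, IsometryEquiv.subLeft_apply, mem_inter_iff]
    rw [hsy, hb]; tauto
  simp only [hAS]
  refine limit_lemma TsetE Q α C _ hC0 (fun r => (T_meas Q r).1) (T_meas Q α).2 ?_ ?_
  · intro s hs2 hCs
    obtain ⟨κ, hk, hκ0, hκ⟩ := kappa_exists s hs2
    have hk' : (-s) ^ 2 = 2 * κ - κ ^ 2 := by rw [neg_sq]; exact hk
    have hκ' : κ ≤ |-s| := by rwa [abs_neg]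
    have h0 := abs_nonneg s
    have hc : 1 / 2 ≤ 1 - κ := by linarith
    have hc0 : (1 - κ) ≠ 0 := by linarith
    have hxy : ∀ P ∈ S s, (nsel P 0 / (1 - κ)) ^ 2 + (nsel P 1 / (1 - κ)) ^ 2 = 1 := by
      intro P hP
      have h1 := (hsel P hP.1).1
      have h2 := hP.2
      unfold unitVec at h1
      rw [Fin.sum_univ_three, h2] at h1
      rw [div_pow, div_pow, ← add_div, div_eq_one_iff_eq (by positivity)]
      linarith
    set f : E9 → E9 := fun P => rotE (-s) κ (nsel P 0 / (1 - κ)) (nsel P 1 / (1 - κ)) P with hf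
    refine (meas_le (S s) f (C * |s|) hCs ?_).trans ?_
    · intro P hP P' hP'
      have hdl : ∀ i, |nsel P i / (1 - κ) - nsel P' i / (1 - κ)| ≤ L * ‖P - P'‖ := by
        intro i
        rw [← sub_div, abs_div, abs_of_pos (by linarith : 0 < 1 - κ), div_le_iff₀ (by linarith)]
        refine (hlip P hP.1 P' hP'.1 i).trans ?_
        have : L * ‖P - P'‖ * (1 / 2) ≤ L * ‖P - P'‖ * (1 - κ) := by gcongr
        refine le_trans (le_of_eq ?_) this
        rw [hL]; ring
      have := rot_lip (-s) κ _ _ _ _ M L P P' (hxy P hP) (hxy P' hP') hκ0 hκ'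
        (by rw [abs_neg]; linarith) (hMb P hP.1) (hMb P' hP'.1) hL0.le (hdl 0) (hdl 1)
      rw [abs_neg] at this
      refine this.trans ?_
      gcongr
      linarith
    · gcongr
      rintro _ ⟨P, hP, rfl⟩
      obtain ⟨lam, hl⟩ := hnear P hP.1
      have hsim := simple_conj (near_simple hs hl) (K_orth _ _ _ _ (hxy P hP) hk')
        (K_orth' _ _ _ _ (hxy P hP) hk')
      rw [← toM_ofM ((1 + _) * toM P * _)] at hsim
      refine ⟨?_, rot_sym hP.1.2 (hxy P hP) hk', simple_ne_zero hsim (by linarith [hl.2.1]), lam, _,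
        hsim, ?_⟩
      · have hr := rot_near (-s) κ _ _ M P (hxy P hP) hκ0 hκ' (by rw [abs_neg]; linarith)
          (hMb P hP.1)
        rw [← dist_eq_norm, abs_neg] at hr
        have := dist_triangle (f P) P Q
        have := mem_ball.1 hP.1.1
        rw [mem_ball]
        have : 15 * M * |s| ≤ C * |s| := by
          gcongr
          rw [hC]; nlinarith [mul_nonneg hL0.le hM0]
        linarith
      · have h1 := hxy P hP
        have h2 := hP.2
        rw [K_mulVec]
        simp only [Matrix.cons_val]
        rw [h2]
        have : nsel P 0 / (1 - κ) * nsel P 0 + nsel P 1 / (1 - κ) * nsel P 1 =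
          (1 - κ) * ((nsel P 0 / (1 - κ)) ^ 2 + (nsel P 1 / (1 - κ)) ^ 2) := by field_simp
        rw [this, h1]; ring
  · intro s hs2 hCs
    obtain ⟨κ, hk, hκ0, hκ⟩ := kappa_exists s hs2
    have h0 := abs_nonneg s
    have hc : 1 / 2 ≤ 1 - κ := by linarith
    set S' := ball Q (α - C * |s|) ∩ TsetE with hS'
    have hU : ∀ P ∈ S', P ∈ ball Q α ∩ Sym0E := by
      intro P hP
      exact ⟨ball_subset_ball (by nlinarith) hP.1, hP.2.1⟩
    have hn2 : ∀ P ∈ S', nsel P 2 = 0 := by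
      intro P hP
      obtain ⟨-, -, lam, n, hsim, hn⟩ := hP.2
      obtain ⟨-, lam', hm'⟩ := hsel P (hU P hP)
      obtain ⟨t, ht, -⟩ := max_unique hsim hm'
      rw [ht]; simp [hn]
    have hxy : ∀ P ∈ S', (nsel P 0) ^ 2 + (nsel P 1) ^ 2 = 1 := by
      intro P hP
      have h1 := (hsel P (hU P hP)).1
      unfold unitVec at h1
      rw [Fin.sum_univ_three, hn2 P hP] at h1
      linarith
    set f : E9 → E9 := fun P => rotE s κ (nsel P 0) (nsel P 1) P with hf
    refine (meas_le S' f (C * |s|) hCs ?_).trans ?_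
    · intro P hP P' hP'
      have hdl : ∀ i, |nsel P i - nsel P' i| ≤ L * ‖P - P'‖ := by
        intro i
        refine (hlip P (hU P hP) P' (hU P' hP') i).trans ?_
        rw [hL]; gcongr; norm_num
      have := rot_lip s κ _ _ _ _ M L P P' (hxy P hP) (hxy P' hP') hκ0 hκ
        (by linarith) (hMb P (hU P hP)) (hMb P' (hU P' hP')) hL0.le (hdl 0) (hdl 1)
      refine this.trans ?_
      gcongr
      linarith
    · gcongr
      rintro _ ⟨P, hP, rfl⟩
      obtain ⟨lam, hl⟩ := hnear P (hU P hP)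
      have hsim := simple_conj (near_simple hs hl) (K_orth _ _ _ _ (hxy P hP) hk)
        (K_orth' _ _ _ _ (hxy P hP) hk)
      rw [← toM_ofM ((1 + _) * toM P * _)] at hsim
      have hfU : f P ∈ ball Q α ∩ Sym0E := by
        refine ⟨?_, rot_sym (hU P hP).2 (hxy P hP) hk⟩
        have hr := rot_near s κ _ _ M P (hxy P hP) hκ0 hκ (by linarith) (hMb P (hU P hP))
        rw [← dist_eq_norm] at hr
        have := dist_triangle (f P) P Q
        have := mem_ball.1 hP.1
        rw [mem_ball]
        have : 15 * M * |s| ≤ C * |s| := by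
          gcongr
          rw [hC]; nlinarith [mul_nonneg hL0.le hM0]
        linarith
      refine ⟨hfU, ?_⟩
      obtain ⟨-, lam', hm'⟩ := hsel _ hfU
      obtain ⟨t, ht, ht1⟩ := max_unique hsim hm'
      have h1 := hxy P hP
      have h2 := hn2 P hP
      have hRn := K_mulVec s κ (nsel P 0) (nsel P 1) (nsel P)
      have hh : nsel P 0 * nsel P 0 + nsel P 1 * nsel P 1 = 1 := by nlinarith
      rw [hh, h2] at hRn
      rw [hRn] at ht
      have hpos := hsign P (hU P hP) _ hfU
      rw [ht] at hpos
      have e : nsel P ⬝ᵥ (t • ![nsel P 0 - κ * nsel P 0 * 1 - s * nsel P 0 * 0,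
          nsel P 1 - κ * nsel P 1 * 1 - s * nsel P 1 * 0, s * 1 + (1 - κ) * 0]) = t * (1 - κ) := by
        simp [dotProduct, Fin.sum_univ_three, h2]
        linear_combination t * (1 - κ) * h1
      rw [e] at hpos
      have htp : 0 < t := pos_of_mul_pos_left hpos (by linarith)
      have : t = 1 := by nlinarith
      rw [ht, this]
      simp

theorem statement10 (sS : ℝ) (hs : 0 < sS) :
    ∃ α₀ > (0 : ℝ), ∃ α₁ > (0 : ℝ),
      ∀ Q : E9, Q ∈ Sym0E → infDist Q (NsetE sS) ≤ α₀ →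
      ∀ α : ℝ, 0 < α → α < α₁ →
      ∀ nsel : E9 → (Fin 3 → ℝ), ContinuousOn nsel (ball Q α ∩ Sym0E) →
      (∀ P ∈ ball Q α ∩ Sym0E,
        unitVec (nsel P) ∧ ∃ lam : ℝ, MaxEigen (toM P) lam (nsel P)) →
      Tendsto (fun s : ℝ =>
          μH[4] {Y : E9 | Y ∈ Sym0E ∧ Y ∈ ball (0 : E9) α ∧ nsel (Q - Y) 2 = s})
        (nhdsWithin 0 {(0 : ℝ)}ᶜ)
        (nhds (μH[4] (ball Q α ∩ TsetE))) := by
  exact ⟨sS / 100, by positivity, sS / 100, by positivity, fun Q hQ hinf α hα hα1 nsel hc hsel =>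
    main_aux sS hs Q hQ hinf α hα hα1 nsel hc hsel⟩
end
end
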